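/- Let μ be a probability measure supported on a finite set H of increasing C² diffeomorphisms h of [0,1] (so h(0) = 0, h(1) = 1 and h' > 0 on [0,1]). Assume: (R') Σ_{h∈H} μ(h) ln h'(0) ≥ 0 and Σ_{h∈H} μ(h) ln h'(1) ≥ 0; (C') there exists h ∈ H with h'(0) > 1 and h'(1) > 1; (U') for every x ∈ (0,1) there exist h₁, h₂ ∈ H with h₁(x) < x < h₂(x). Then there exists a nonzero invariant Radon measure on (0,1), and any two nonzero invariant Radon measures on (0,1) coincide up to a positive multiplicative constant. -/

import Mathlib

open MeasureTheory Filter Set Function Topology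
open scoped ENNReal NNReal

/-- A Radon measure on the open interval `(0,1)`, viewed as a Borel measure on `ℝ`
concentrated on `(0,1)` and finite on compact subsets of `(0,1)`. -/
def IsRadonOn01 (ν : Measure ℝ) : Prop :=
  ν (Ioo (0:ℝ) 1)ᶜ = 0 ∧ ∀ K : Set ℝ, K ⊆ Ioo (0:ℝ) 1 → IsCompact K → ν K < ⊤

/-- Invariance on `(0,1)` of `ν` for the system given by the maps `h i` with weights
`w i`:  `∫ f dν = Σ_i w i · ∫ f(h i x) dν(x)` for every continuous `f` with compact
support contained in `(0,1)`. -/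
def IsInvOn01 {ι : Type*} [Fintype ι] (h : ι → ℝ → ℝ) (w : ι → ℝ) (ν : Measure ℝ) : Prop :=
  ∀ f : ℝ → ℝ, Continuous f → HasCompactSupport f → tsupport f ⊆ Ioo (0:ℝ) 1 →
    ∫ x, f x ∂ν = ∑ i : ι, w i * ∫ x, f (h i x) ∂ν

/-!
Conjugating by the logistic function turns the maps into homeomorphisms of the line that are, near
each end, translations up to an exponentially small error: by `log h'(0)` near `-∞` and by
`-log h'(1)` near `+∞`. Condition (R') says that this walk is not pushed outwards on average, and
that the walk of the inverse maps has nonnegative outward drift at both ends.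

*Existence.* The distance to the origin, corrected by a bounded term, is superharmonic outside a
compact set. Hence the Green sums of a suitable bump function `φ` diverge and dominate those of
every compactly supported function. A limit of Green sums normalised by that of `φ` is a positive
functional invariant under the Markov operator, and the Riesz representation theorem turns it into
a stationary measure.

*Uniqueness.* The distribution functions `F₁`, `F₂` of two stationary measures are, up to constants,
monotone and harmonic for the walk of the inverse maps; we show that some `α F₁ - (1 - α) F₂` is
constant. Barrier functions at the two ends bound the increments of `F₁` and `F₂`, and make some
such combination bounded. At an end with positive drift `F₁` and `F₂` have limits, and the maximum
principle applies; an end with zero drift is recurrent and does not affect the maximum principle. If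
the drift vanishes at both ends, the combination `D` attains its bounds once one-sided limits are
added to the line. On the invariant set where `D` is extremal, the variation of `D` has increments
preserved by every map; by (C') it is then constant near `+∞`, so the maximum and the minimum of `D`
agree.
-/

namespace IntervalWalk

/-! ### Markov operators of finitely supported random walks -/

section MarkovOp

variable {ι X Y : Type*} [Fintype ι] {w : ι → ℝ} {γ : ι → X → X} {f f' : X → ℝ} {x : X} {c : ℝ}

/-- `w` is a probability vector with full support. -/
structure IsProbWeight (w : ι → ℝ) : Prop where
  pos : ∀ i, 0 < w i
  sum_eq_one : ∑ i, w i = 1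

/-- The Markov operator `f ↦ ∑ i, w i * f ∘ γ i` of the random walk on `X` which moves `x` to
`γ i x` with probability `w i`. -/
def markovOp (w : ι → ℝ) (γ : ι → X → X) : (X → ℝ) →ₗ[ℝ] X → ℝ where
  toFun f x := ∑ i, w i * f (γ i x)
  map_add' f f' := by ext x; simp only [Pi.add_apply, mul_add, Finset.sum_add_distrib]
  map_smul' c f := by
    ext x
    simp only [Pi.smul_apply, smul_eq_mul, RingHom.id_apply, Finset.mul_sum, mul_left_comm]

lemma markovOp_apply (w : ι → ℝ) (γ : ι → X → X) (f : X → ℝ) (x : X) :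
    markovOp w γ f x = ∑ i, w i * f (γ i x) := rfl

lemma markovOp_comp_of_semiconj {g : ι → Y → Y} {π : X → Y} (hπ : ∀ i, Semiconj π (γ i) (g i))
    (w : ι → ℝ) (f : Y → ℝ) : markovOp w γ (f ∘ π) = markovOp w g f ∘ π := by
  ext x
  simp only [markovOp_apply, comp_apply, (hπ _).eq]

namespace IsProbWeight

lemma nonempty (hw : IsProbWeight w) : Nonempty ι := by
  by_contra h
  rw [not_nonempty_iff] at h
  simpa using hw.sum_eq_one

lemma sum_mul_const (hw : IsProbWeight w) (c : ℝ) : ∑ i, w i * c = c := by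
  rw [← Finset.sum_mul, hw.sum_eq_one, one_mul]

lemma markovOp_const (hw : IsProbWeight w) (c : ℝ) :
    markovOp w γ (fun _ => c) = fun _ => c :=
  funext fun _ => hw.sum_mul_const c

lemma markovOp_le_markovOp (hw : IsProbWeight w) (h : ∀ i, f (γ i x) ≤ f' (γ i x)) :
    markovOp w γ f x ≤ markovOp w γ f' x :=
  Finset.sum_le_sum fun i _ => mul_le_mul_of_nonneg_left (h i) (hw.pos i).le

lemma markovOp_le (hw : IsProbWeight w) (h : ∀ i, f (γ i x) ≤ c) : markovOp w γ f x ≤ c :=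
  (hw.markovOp_le_markovOp (f' := fun _ => c) h).trans_eq (hw.sum_mul_const c)

lemma le_markovOp (hw : IsProbWeight w) (h : ∀ i, c ≤ f (γ i x)) : c ≤ markovOp w γ f x :=
  (hw.sum_mul_const c).symm.trans_le (hw.markovOp_le_markovOp (f := fun _ => c) h)

lemma exists_sSup_lt_of_add_le_markovOp (hw : IsProbWeight w) {Z : Set X} (hZ : Z.Nonempty)
    (hc : 0 < c) (hf : ∀ x ∈ Z, f x + c ≤ markovOp w γ f x) :
    ∃ x ∈ Z, ∃ i, sSup (f '' Z) < f (γ i x) := by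
  by_contra! h
  have hle : sSup (f '' Z) ≤ sSup (f '' Z) - c := by
    refine csSup_le (hZ.image f) ?_
    rintro _ ⟨x, hx, rfl⟩
    linarith [hf x hx, hw.markovOp_le (h x hx)]
  linarith

end IsProbWeight

end MarkovOp

/-! ### Walks asymptotic to translations at `+∞` -/

/-- A random walk on `ℝ` with jumps bounded by `K` that is exponentially close, near `+∞`, to the
walk by the translations `s ↦ s + m i`, not all of which are trivial. -/
structure AsympTranslation {ι : Type*} [Fintype ι] (w m : ι → ℝ) (g : ι → ℝ → ℝ) (B K : ℝ) :
    Prop where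
  isProbWeight : IsProbWeight w
  exists_ne_zero : ∃ i, m i ≠ 0
  abs_sub_sub_le : ∀ i s, |g i s - s - m i| ≤ B * Real.exp (-s)
  abs_sub_le : ∀ i s, |g i s - s| ≤ K

lemma tendsto_const_mul_exp_neg (B : ℝ) :
    Tendsto (fun s => B * Real.exp (-s)) atTop (𝓝 0) := by
  simpa using Real.tendsto_exp_neg_atTop_nhds_zero.const_mul B

lemma exp_neg_sub_exp_neg_le (s t : ℝ) :
    Real.exp (-s) - Real.exp (-t) ≤ Real.exp (-s) * (t - s) := by
  have hexp : Real.exp (-t) = Real.exp (-s) * Real.exp (s - t) := by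
    rw [← Real.exp_add]; congr 1; ring
  have := mul_le_mul_of_nonneg_left (Real.add_one_le_exp (s - t)) (Real.exp_pos (-s)).le
  linarith

namespace AsympTranslation

variable {ι : Type*} [Fintype ι] {w m : ι → ℝ} {g : ι → ℝ → ℝ} {B K : ℝ}

lemma le_add (S : AsympTranslation w m g B K) (i : ι) (s : ℝ) : g i s ≤ s + K := by
  linarith [(abs_le.1 (S.abs_sub_le i s)).2]

lemma sub_le (S : AsympTranslation w m g B K) (i : ι) (s : ℝ) : s - K ≤ g i s := by
  linarith [(abs_le.1 (S.abs_sub_le i s)).1]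

lemma B_nonneg (S : AsympTranslation w m g B K) : 0 ≤ B := by
  obtain ⟨i⟩ := S.isProbWeight.nonempty
  simpa using (abs_nonneg _).trans (S.abs_sub_sub_le i 0)

lemma K_pos (S : AsympTranslation w m g B K) : 0 < K := by
  obtain ⟨i, hi⟩ := S.exists_ne_zero
  refine (abs_pos.2 hi).trans_le (ge_of_tendsto' (x := atTop)
    (by simpa using (tendsto_const_mul_exp_neg B).const_add K) fun s => ?_)
  calc |m i| = |(g i s - s) - (g i s - s - m i)| := by ring_nf
    _ ≤ |g i s - s| + |g i s - s - m i| := abs_sub _ _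
    _ ≤ K + B * Real.exp (-s) := add_le_add (S.abs_sub_le i s) (S.abs_sub_sub_le i s)

lemma one_lt_sum_mul_exp_neg (S : AsympTranslation w m g B K) (hm : ∑ i, w i * m i ≤ 0) :
    1 < ∑ i, w i * Real.exp (-m i) := by
  have hw := S.isProbWeight
  calc 1 ≤ ∑ i, w i * (-m i + 1) := by
        simp only [mul_add, mul_neg, Finset.sum_add_distrib, Finset.sum_neg_distrib,
          hw.sum_mul_const]
        linarith
    _ < ∑ i, w i * Real.exp (-m i) := by
        obtain ⟨i, hi⟩ := S.exists_ne_zero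
        exact Finset.sum_lt_sum
          (fun i _ => mul_le_mul_of_nonneg_left (Real.add_one_le_exp _) (hw.pos i).le)
          ⟨i, Finset.mem_univ i,
            mul_lt_mul_of_pos_left (Real.add_one_lt_exp (neg_ne_zero.2 hi)) (hw.pos i)⟩

lemma exists_one_add_mul_exp_neg_le (S : AsympTranslation w m g B K)
    (hm : ∑ i, w i * m i ≤ 0) :
    ∃ κ > 0, ∃ R, ∀ s ≥ R,
      (1 + κ) * Real.exp (-s) ≤ markovOp w g (fun t => Real.exp (-t)) s := by
  set M := ∑ i, w i * Real.exp (-m i) with hM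
  have hM1 : 1 < M := S.one_lt_sum_mul_exp_neg hm
  have hlim : Tendsto (fun s => Real.exp (-(B * Real.exp (-s))) * M) atTop (𝓝 M) := by
    simpa using ((Real.continuous_exp.tendsto _).comp
      (tendsto_const_mul_exp_neg B).neg).mul_const M
  obtain ⟨R, hR⟩ := eventually_atTop.1
    (hlim.eventually (eventually_ge_nhds (show 1 + (M - 1) / 2 < M by linarith)))
  refine ⟨(M - 1) / 2, by linarith, R, fun s hs => ?_⟩
  calc (1 + (M - 1) / 2) * Real.exp (-s)
      ≤ Real.exp (-(B * Real.exp (-s))) * M * Real.exp (-s) :=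
        mul_le_mul_of_nonneg_right (hR s hs) (Real.exp_pos _).le
    _ = ∑ i, w i * Real.exp (-m i - B * Real.exp (-s) - s) := by
        rw [hM, Finset.mul_sum, Finset.sum_mul]
        refine Finset.sum_congr rfl fun i _ => ?_
        rw [sub_eq_add_neg, sub_eq_add_neg, Real.exp_add, Real.exp_add]
        ring
    _ ≤ markovOp w g (fun t => Real.exp (-t)) s := by
        refine Finset.sum_le_sum fun i _ => mul_le_mul_of_nonneg_left ?_
          (S.isProbWeight.pos i).le
        exact Real.exp_le_exp.2 (by linarith [(abs_le.1 (S.abs_sub_sub_le i s)).2])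

lemma abs_markovOp_id_sub_le (S : AsympTranslation w m g B K) (s : ℝ) :
    |markovOp w g id s - s - ∑ i, w i * m i| ≤ B * Real.exp (-s) := by
  have hw := S.isProbWeight
  have hsum : markovOp w g id s - s - ∑ i, w i * m i = ∑ i, w i * (g i s - s - m i) := by
    simp only [markovOp_apply, id, mul_sub, Finset.sum_sub_distrib, hw.sum_mul_const]
  calc |markovOp w g id s - s - ∑ i, w i * m i|
      ≤ ∑ i, |w i * (g i s - s - m i)| := hsum ▸ Finset.abs_sum_le_sum_abs _ _
    _ ≤ ∑ i, w i * (B * Real.exp (-s)) := by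
        refine Finset.sum_le_sum fun i _ => ?_
        rw [abs_mul, abs_of_pos (hw.pos i)]
        exact mul_le_mul_of_nonneg_left (S.abs_sub_sub_le i s) (hw.pos i).le
    _ = B * Real.exp (-s) := hw.sum_mul_const _

-- The convexity gain of `exp (-s)` absorbs the deviation from the translation walk.
lemma exists_abs_markovOp_id_sub_le (S : AsympTranslation w m g B K)
    (hm : ∑ i, w i * m i ≤ 0) :
    ∃ A₀ ≥ 0, ∃ R, ∀ A ≥ A₀, ∀ s ≥ R, |markovOp w g id s - s - ∑ i, w i * m i| ≤
      A * (markovOp w g (fun t => Real.exp (-t)) s - Real.exp (-s)) := by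
  obtain ⟨κ, hκ, R, hR⟩ := S.exists_one_add_mul_exp_neg_le hm
  have hA₀ : 0 ≤ B / κ := div_nonneg S.B_nonneg hκ.le
  refine ⟨B / κ, hA₀, R, fun A hA s hs => ?_⟩
  calc |markovOp w g id s - s - ∑ i, w i * m i| ≤ B * Real.exp (-s) :=
        S.abs_markovOp_id_sub_le s
    _ = B / κ * (κ * Real.exp (-s)) := by field_simp
    _ ≤ A * (κ * Real.exp (-s)) := by gcongr
    _ ≤ _ := mul_le_mul_of_nonneg_left (by linarith [hR s hs]) (hA₀.trans hA)

lemma exists_superharmonic_sub_exp (S : AsympTranslation w m g B K) (hm : ∑ i, w i * m i ≤ 0) :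
    ∃ A₀ ≥ 0, ∃ R, ∀ A ≥ A₀, ∀ s ≥ R,
      markovOp w g (fun t => t - A * Real.exp (-t)) s ≤ s - A * Real.exp (-s) := by
  obtain ⟨A₀, hA₀, R, hR⟩ := S.exists_abs_markovOp_id_sub_le hm
  refine ⟨A₀, hA₀, R, fun A hA s hs => ?_⟩
  have hlin : markovOp w g (fun t => t - A * Real.exp (-t)) =
      markovOp w g id - A • markovOp w g (fun t => Real.exp (-t)) := by
    rw [← map_smul, ← map_sub]; rfl
  simp only [hlin, Pi.sub_apply, Pi.smul_apply, smul_eq_mul]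
  linarith [(abs_le.1 (hR A hA s hs)).2]

lemma exists_subharmonic_add_exp (S : AsympTranslation w m g B K) (hm : ∑ i, w i * m i = 0) :
    ∃ A ≥ 0, ∃ R, ∀ s ≥ R,
      s + A * Real.exp (-s) ≤ markovOp w g (fun t => t + A * Real.exp (-t)) s := by
  obtain ⟨A, hA, R, hR⟩ := S.exists_abs_markovOp_id_sub_le hm.le
  refine ⟨A, hA, R, fun s hs => ?_⟩
  have hlin : markovOp w g (fun t => t + A * Real.exp (-t)) =
      markovOp w g id + A • markovOp w g (fun t => Real.exp (-t)) := by
    rw [← map_smul, ← map_add]; rfl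
  simp only [hlin, Pi.add_apply, Pi.smul_apply, smul_eq_mul]
  linarith [(abs_le.1 (hR A le_rfl s hs)).1]

end AsympTranslation

/-! ### Barrier functions at `+∞` -/

section Truncate

variable {φ : ℝ → ℝ} {R K C : ℝ}

/-- The function `φ`, frozen to the left of `R` and normalised to vanish there. -/
def truncate (φ : ℝ → ℝ) (R s : ℝ) : ℝ := φ (max s R) - φ R

lemma truncate_of_le {s : ℝ} (hs : s ≤ R) : truncate φ R s = 0 := by
  rw [truncate, max_eq_right hs, sub_self]

lemma truncate_of_ge {s : ℝ} (hs : R ≤ s) : truncate φ R s = φ s - φ R := by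
  rw [truncate, max_eq_left hs]

lemma monotone_truncate (hφ : MonotoneOn φ (Ici R)) : Monotone (truncate φ R) := fun _ _ hst =>
  sub_le_sub_right (hφ (mem_Ici.2 (le_max_right _ _)) (mem_Ici.2 (le_max_right _ _))
    (max_le_max_right _ hst)) _

lemma truncate_sub_truncate_le (hC : 0 ≤ C)
    (hφ : ∀ s t, R ≤ s → s ≤ t → φ t - φ s ≤ C * (t - s)) {s t : ℝ} (hst : s ≤ t) :
    truncate φ R t - truncate φ R s ≤ C * (t - s) :=
  calc truncate φ R t - truncate φ R s = φ (max t R) - φ (max s R) := by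
        rw [truncate, truncate, sub_sub_sub_cancel_right]
    _ ≤ C * (max t R - max s R) := hφ _ _ (le_max_right _ _) (max_le_max_right _ hst)
    _ ≤ C * (t - s) := mul_le_mul_of_nonneg_left ((max_sub_max_le_max t R s R).trans
        (max_le le_rfl (by linarith))) hC

lemma truncate_le_markovOp {ι : Type*} [Fintype ι] {w : ι → ℝ} {g : ι → ℝ → ℝ}
    (hw : IsProbWeight w) (hg : ∀ i s, s - K ≤ g i s) (hφ : MonotoneOn φ (Ici (R - K)))
    (hK : 0 ≤ K) (hsub : ∀ s ≥ R, φ s ≤ markovOp w g φ s) (s : ℝ) :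
    truncate φ R s ≤ markovOp w g (truncate φ R) s := by
  have hR : R - K ≤ R := sub_le_self R hK
  rcases le_total s R with hs | hs
  · have hmono := monotone_truncate (hφ.mono (Ici_subset_Ici.2 hR))
    rw [truncate_of_le hs]
    refine hw.le_markovOp fun i => ?_
    rcases le_total (g i s) R with hi | hi
    · exact (truncate_of_le hi).ge
    · exact (truncate_of_le le_rfl).symm.trans_le (hmono hi)
  · calc truncate φ R s = φ s - φ R := truncate_of_ge hs
      _ ≤ markovOp w g φ s - φ R := sub_le_sub_right (hsub s hs) _
      _ = markovOp w g (φ - fun _ => φ R) s := by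
          rw [map_sub, hw.markovOp_const, Pi.sub_apply]
      _ ≤ markovOp w g (truncate φ R) s := hw.markovOp_le_markovOp fun i =>
          have hi : R - K ≤ g i s := (sub_le_sub_right hs K).trans (hg i s)
          sub_le_sub_right (hφ hi (hi.trans (le_max_left _ _)) (le_max_left _ _)) _

end Truncate

/-- A barrier at `+∞` for the walk `g`: a monotone subharmonic function `U`, Lipschitz and
supported in `[r, ∞)`, together with a nonnegative function `W` which dominates every multiple of
`U` and whose mean increase along the walk is bounded on `[0, ∞)`. -/
structure IsBarrier {ι : Type*} [Fintype ι] (w : ι → ℝ) (g : ι → ℝ → ℝ) (r : ℝ) (U W : ℝ → ℝ)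
    (C : ℝ) : Prop where
  monotone : Monotone U
  eq_zero : ∀ s ≤ r, U s = 0
  exists_pos : ∃ s, 0 < U s
  le_markovOp : ∀ s, U s ≤ markovOp w g U s
  sub_le : ∀ s t, s ≤ t → U t - U s ≤ C * (t - s)
  nonneg_dominant : ∀ s, 0 ≤ W s
  markovOp_dominant_le : ∀ s ≥ 0, markovOp w g W s ≤ W s + C
  bddBelow_dominant_sub : ∀ L ≥ 0, ∃ b, ∀ s, b ≤ W s - L * U s

namespace IsBarrier

variable {ι : Type*} [Fintype ι] {w : ι → ℝ} {g : ι → ℝ → ℝ} {r C : ℝ} {U W : ℝ → ℝ}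

lemma nonneg (h : IsBarrier w g r U W C) (s : ℝ) : 0 ≤ U s := by
  rcases le_total s r with hs | hs
  · exact (h.eq_zero s hs).ge
  · exact (h.eq_zero r le_rfl).symm.trans_le (h.monotone hs)

lemma C_nonneg (h : IsBarrier w g r U W C) : 0 ≤ C := by
  linarith [h.sub_le 0 1 zero_le_one, h.monotone (zero_le_one (α := ℝ))]

end IsBarrier

section Profiles

variable {A α R : ℝ}

lemma monotoneOn_add_mul_exp_neg (hA : 0 ≤ A) (hR : A * Real.exp (-R) ≤ 1) :
    MonotoneOn (fun s => s + A * Real.exp (-s)) (Ici R) := fun s hs t _ hst => by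
  have hslope : A * Real.exp (-s) ≤ 1 :=
    (mul_le_mul_of_nonneg_left (Real.exp_le_exp.2 (neg_le_neg hs)) hA).trans hR
  have hdiff := mul_le_mul_of_nonneg_left (exp_neg_sub_exp_neg_le s t) hA
  have := mul_le_mul_of_nonneg_right hslope (sub_nonneg.2 hst)
  change s + A * Real.exp (-s) ≤ t + A * Real.exp (-t)
  linarith

lemma add_mul_exp_neg_sub_le (hA : 0 ≤ A) {s t : ℝ} (hst : s ≤ t) :
    t + A * Real.exp (-t) - (s + A * Real.exp (-s)) ≤ t - s := by
  linarith [mul_le_mul_of_nonneg_left (Real.exp_le_exp.2 (neg_le_neg hst)) hA]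

lemma truncate_add_mul_exp_neg_le (hA : 0 ≤ A) (s : ℝ) :
    truncate (fun t => t + A * Real.exp (-t)) R s ≤ |s| + |R| := by
  have h := add_mul_exp_neg_sub_le hA (le_max_right s R)
  have : max s R - R ≤ |s| + |R| := by
    linarith [max_le (show s ≤ |s| + |R| + R by linarith [le_abs_self s, neg_abs_le R])
      (show R ≤ |s| + |R| + R by linarith [abs_nonneg s, abs_nonneg R])]
  exact h.trans this

lemma exp_neg_mul_le_one {s : ℝ} (hα : 0 ≤ α) (hs : 0 ≤ s) : Real.exp (-(α * s)) ≤ 1 :=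
  Real.exp_le_one_iff.2 (neg_nonpos.2 (mul_nonneg hα hs))

lemma neg_exp_neg_mul_sub_le (hα : 0 ≤ α) {s t : ℝ} (hs : 0 ≤ s) (hst : s ≤ t) :
    -Real.exp (-(α * t)) - -Real.exp (-(α * s)) ≤ α * (t - s) :=
  calc -Real.exp (-(α * t)) - -Real.exp (-(α * s))
      ≤ Real.exp (-(α * s)) * (α * (t - s)) := by
        linarith [exp_neg_sub_exp_neg_le (α * s) (α * t)]
    _ ≤ α * (t - s) := mul_le_of_le_one_left (mul_nonneg hα (sub_nonneg.2 hst))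
        (exp_neg_mul_le_one hα hs)

lemma truncate_neg_exp_neg_mul_le_one (hα : 0 ≤ α) (hR : 0 ≤ R) (s : ℝ) :
    truncate (fun t => -Real.exp (-(α * t))) R s ≤ 1 := by
  have := Real.exp_pos (-(α * max s R))
  have := exp_neg_mul_le_one hα hR
  simp only [truncate]
  linarith

end Profiles

namespace AsympTranslation

variable {ι : Type*} [Fintype ι] {w m : ι → ℝ} {g : ι → ℝ → ℝ} {B K : ℝ}

lemma markovOp_sq_le (S : AsympTranslation w m g B K) (hm : ∑ i, w i * m i = 0) {s : ℝ}
    (hs : 0 ≤ s) : markovOp w g (fun t => t ^ 2) s ≤ s ^ 2 + (2 * B + K ^ 2) := by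
  have hw := S.isProbWeight
  have hdrift : markovOp w g id s - s ≤ B * Real.exp (-s) := by
    linarith [(abs_le.1 (S.abs_markovOp_id_sub_le s)).2]
  have hexp : s * Real.exp (-s) ≤ 1 := by
    rw [Real.exp_neg, ← div_eq_mul_inv, div_le_one (Real.exp_pos _)]
    linarith [Real.add_one_le_exp s]
  calc markovOp w g (fun t => t ^ 2) s
      ≤ ∑ i, w i * (2 * s * g i s - s ^ 2 + K ^ 2) := by
        refine Finset.sum_le_sum fun i _ => mul_le_mul_of_nonneg_left ?_ (hw.pos i).le
        have := sq_le_sq' (abs_le.1 (S.abs_sub_le i s)).1 (abs_le.1 (S.abs_sub_le i s)).2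
        linarith
    _ = s ^ 2 + (2 * (s * (markovOp w g id s - s)) + K ^ 2) := by
        simp only [mul_add, mul_sub, mul_left_comm _ (2 * s), Finset.sum_add_distrib,
          Finset.sum_sub_distrib, ← Finset.mul_sum, hw.sum_mul_const, markovOp_apply, id]
        ring
    _ ≤ s ^ 2 + (2 * (s * (B * Real.exp (-s))) + K ^ 2) := by
        gcongr
    _ ≤ s ^ 2 + (2 * B + K ^ 2) := by
        linarith [mul_le_mul_of_nonneg_left hexp S.B_nonneg]

lemma exists_isBarrier_of_drift_eq_zero (S : AsympTranslation w m g B K)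
    (hm : ∑ i, w i * m i = 0) (r : ℝ) : ∃ U W C, IsBarrier w g r U W C := by
  have hw := S.isProbWeight
  have hK := S.K_pos
  obtain ⟨A, hA, R₀, hR₀⟩ := S.exists_subharmonic_add_exp hm
  have hflat : ∀ᶠ R in atTop, A * Real.exp (-(R - K)) ≤ 1 :=
    ((tendsto_const_mul_exp_neg A).comp
      (tendsto_atTop_add_const_right _ (-K) tendsto_id)).eventually (eventually_le_nhds one_pos)
  obtain ⟨R, hflat, hR₀R, hrR⟩ :=
    (hflat.and ((eventually_ge_atTop R₀).and (eventually_ge_atTop r))).exists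
  set φ : ℝ → ℝ := fun s => s + A * Real.exp (-s) with hφ
  have hφmono : MonotoneOn φ (Ici (R - K)) := monotoneOn_add_mul_exp_neg hA hflat
  have hB := S.B_nonneg
  have hC : 1 ≤ 1 + 2 * B + K ^ 2 := by nlinarith
  refine ⟨truncate φ R, fun s => s ^ 2, 1 + 2 * B + K ^ 2,
    monotone_truncate (hφmono.mono (Ici_subset_Ici.2 (by linarith))),
    fun s hs => truncate_of_le (hs.trans hrR), ⟨R + A * Real.exp (-R) + 1, ?_⟩,
    truncate_le_markovOp hw S.sub_le hφmono hK.le fun s hs => hR₀ s (hR₀R.trans hs),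
    fun s t hst => ?_, fun s => sq_nonneg s, fun s hs => ?_, fun L hL => ⟨-(L ^ 2 + L * |R|),
      fun s => ?_⟩⟩
  · have := mul_nonneg hA (Real.exp_pos (-R)).le
    rw [truncate_of_ge (by linarith)]
    have := mul_nonneg hA (Real.exp_pos (-(R + A * Real.exp (-R) + 1))).le
    simp only [hφ]
    linarith
  · refine truncate_sub_truncate_le (by linarith) (fun s t _ hst => ?_) hst
    exact (add_mul_exp_neg_sub_le hA hst).trans (le_mul_of_one_le_left (sub_nonneg.2 hst) hC)
  · linarith [S.markovOp_sq_le hm hs]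
  · have := mul_le_mul_of_nonneg_left (truncate_add_mul_exp_neg_le (R := R) hA s) hL
    nlinarith [sq_nonneg (|s| - L), sq_nonneg |s|, sq_nonneg L, sq_abs s]

lemma markovOp_exp_neg_mul_le (S : AsympTranslation w m g B K) {α l s : ℝ} (hα : 0 ≤ α)
    (hαK : α * K ≤ 1) (hαl : α * K ^ 2 ≤ l) (hl : l ≤ markovOp w g id s - s) :
    markovOp w g (fun t => Real.exp (-(α * t))) s ≤ Real.exp (-(α * s)) := by
  have hw := S.isProbWeight
  have hterm : ∀ i, Real.exp (-(α * g i s)) ≤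
      (1 + α ^ 2 * K ^ 2 - α * (g i s - s)) * Real.exp (-(α * s)) := fun i => by
    have hsmall : |-(α * (g i s - s))| ≤ 1 := by
      rw [abs_neg, abs_mul, abs_of_nonneg hα]
      exact (mul_le_mul_of_nonneg_left (S.abs_sub_le i s) hα).trans hαK
    have hsq : (-(α * (g i s - s))) ^ 2 ≤ α ^ 2 * K ^ 2 := by
      rw [neg_sq, mul_pow]
      exact mul_le_mul_of_nonneg_left (sq_le_sq' (abs_le.1 (S.abs_sub_le i s)).1
        (abs_le.1 (S.abs_sub_le i s)).2) (sq_nonneg α)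
    have htaylor := (abs_le.1 (Real.abs_exp_sub_one_sub_id_le hsmall)).2
    rw [show -(α * g i s) = -(α * (g i s - s)) + -(α * s) by ring, Real.exp_add]
    exact mul_le_mul_of_nonneg_right (by linarith) (Real.exp_pos _).le
  calc markovOp w g (fun t => Real.exp (-(α * t))) s
      ≤ ∑ i, w i * ((1 + α ^ 2 * K ^ 2 - α * (g i s - s)) * Real.exp (-(α * s))) :=
        Finset.sum_le_sum fun i _ => mul_le_mul_of_nonneg_left (hterm i) (hw.pos i).le
    _ = (1 + α ^ 2 * K ^ 2 - α * (markovOp w g id s - s)) * Real.exp (-(α * s)) := by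
        simp only [← mul_assoc, ← Finset.sum_mul]
        simp only [mul_sub, Finset.sum_sub_distrib, hw.sum_mul_const, mul_left_comm _ α,
          ← Finset.mul_sum, markovOp_apply, id]
    _ ≤ 1 * Real.exp (-(α * s)) := by
        have := mul_le_mul_of_nonneg_left (hαl.trans hl) hα
        exact mul_le_mul_of_nonneg_right (by linarith) (Real.exp_pos _).le
    _ = Real.exp (-(α * s)) := one_mul _

lemma markovOp_abs_le (S : AsympTranslation w m g B K) (s : ℝ) :
    markovOp w g (fun t => |t|) s ≤ |s| + K :=
  S.isProbWeight.markovOp_le fun i => by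
    linarith [abs_sub_abs_le_abs_sub (g i s) s, S.abs_sub_le i s]

lemma exists_subharmonic_neg_exp (S : AsympTranslation w m g B K) (hm : 0 < ∑ i, w i * m i) :
    ∃ α > 0, ∃ R, ∀ s ≥ R,
      -Real.exp (-(α * s)) ≤ markovOp w g (fun t => -Real.exp (-(α * t))) s := by
  have hK := S.K_pos
  set l := ∑ i, w i * m i
  set α := min (1 / K) (l / 2 / K ^ 2)
  have hαpos : 0 < α := lt_min (by positivity) (by positivity)
  obtain ⟨R, hR⟩ := eventually_atTop.1
    ((tendsto_const_mul_exp_neg B).eventually (eventually_le_nhds (half_pos hm)))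
  refine ⟨α, hαpos, R, fun s hs => ?_⟩
  have hneg : markovOp w g (fun t => -Real.exp (-(α * t))) =
      -markovOp w g (fun t => Real.exp (-(α * t))) := by
    rw [← map_neg]; rfl
  rw [hneg]
  refine neg_le_neg (S.markovOp_exp_neg_mul_le hαpos.le ((le_div_iff₀ hK).1 (min_le_left _ _))
    ((le_div_iff₀ (by positivity)).1 (min_le_right _ _)) ?_)
  linarith [(abs_le.1 (S.abs_markovOp_id_sub_le s)).1, hR s hs]

lemma exists_isBarrier_of_drift_pos (S : AsympTranslation w m g B K) (hm : 0 < ∑ i, w i * m i)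
    (r : ℝ) : ∃ U W C, IsBarrier w g r U W C ∧ ∃ b, ∀ s, U s ≤ b := by
  have hK := S.K_pos
  obtain ⟨α, hα, R₀, hR₀⟩ := S.exists_subharmonic_neg_exp hm
  set R := max R₀ (max r 0)
  have hrR : r ≤ R := (le_max_left _ _).trans (le_max_right _ _)
  have hR : 0 ≤ R := (le_max_right _ _).trans (le_max_right _ _)
  set φ : ℝ → ℝ := fun s => -Real.exp (-(α * s))
  have hφmono : Monotone φ := fun s t hst =>
    neg_le_neg (Real.exp_le_exp.2 (neg_le_neg (mul_le_mul_of_nonneg_left hst hα.le)))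
  have hbound : ∀ s, truncate φ R s ≤ 1 := truncate_neg_exp_neg_mul_le_one hα.le hR
  refine ⟨truncate φ R, fun s => |s|, α + K, ⟨monotone_truncate (hφmono.monotoneOn _),
    fun s hs => truncate_of_le (hs.trans hrR), ⟨R + 1, ?_⟩,
    truncate_le_markovOp S.isProbWeight S.sub_le (hφmono.monotoneOn _) hK.le
      fun s hs => hR₀ s ((le_max_left _ _).trans hs),
    fun s t hst => ?_, fun s => abs_nonneg s, fun s _ => ?_, fun L hL => ⟨-L, fun s => ?_⟩⟩,
    1, hbound⟩
  · rw [truncate_of_ge (by linarith)]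
    exact sub_pos.2 (neg_lt_neg (Real.exp_lt_exp.2 (by linarith)))
  · refine truncate_sub_truncate_le (by positivity) (fun s t hs hst => ?_) hst
    exact (neg_exp_neg_mul_sub_le hα.le (hR.trans hs) hst).trans
      (mul_le_mul_of_nonneg_right (by linarith) (sub_nonneg.2 hst))
  · linarith [S.markovOp_abs_le s]
  · linarith [mul_le_mul_of_nonneg_left (hbound s) hL, abs_nonneg s]

lemma exists_isBarrier (S : AsympTranslation w m g B K) (hm : 0 ≤ ∑ i, w i * m i) (r : ℝ) :
    ∃ U W C, IsBarrier w g r U W C := by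
  rcases hm.eq_or_lt with hzero | hpos
  · exact S.exists_isBarrier_of_drift_eq_zero hzero.symm r
  · obtain ⟨U, W, C, h, -⟩ := S.exists_isBarrier_of_drift_pos hpos r
    exact ⟨U, W, C, h⟩

end AsympTranslation

/-! ### Maximum principles for walks with nonnegative drift at `+∞` -/

/-- A random walk on `ℝ` by increasing maps, some of which move any given point to either side,
asymptotic near `+∞` to a walk by translations whose mean drift is nonnegative. -/
structure EndWalk {ι : Type*} [Fintype ι] (w m : ι → ℝ) (g : ι → ℝ → ℝ) (B K : ℝ) : Prop
    extends AsympTranslation w m g B K where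
  drift_nonneg : 0 ≤ ∑ i, w i * m i
  strictMono : ∀ i, StrictMono (g i)
  continuous : ∀ i, Continuous (g i)
  exists_gt : ∀ s, ∃ i, s < g i s
  exists_lt : ∀ s, ∃ i, g i s < s

section CompactGain

variable {ι : Type*} {w : ι → ℝ} {g : ι → ℝ → ℝ} {Z : Set ℝ}

lemma exists_pos_forall_exists_add_le (hg : ∀ i, Continuous (g i)) (hZ : IsCompact Z)
    (hup : ∀ s ∈ Z, ∃ i, s < g i s) : ∃ δ > 0, ∀ s ∈ Z, ∃ i, s + δ ≤ g i s := by
  refine hZ.induction_on (p := fun Z => ∃ δ > 0, ∀ s ∈ Z, ∃ i, s + δ ≤ g i s)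
    ⟨1, one_pos, by simp⟩ ?_ ?_ fun s hs => ?_
  · rintro Z Z' hZZ' ⟨δ, hδ, h⟩
    exact ⟨δ, hδ, fun s hs => h s (hZZ' hs)⟩
  · rintro Z Z' ⟨δ, hδ, h⟩ ⟨δ', hδ', h'⟩
    refine ⟨min δ δ', lt_min hδ hδ', fun s hs => ?_⟩
    rcases hs with hs | hs
    · exact (h s hs).imp fun i hi => (add_le_add_right (min_le_left _ _) s).trans hi
    · exact (h' s hs).imp fun i hi => (add_le_add_right (min_le_right _ _) s).trans hi
  · obtain ⟨i, hi⟩ := hup s hs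
    have hcont : Continuous fun t => g i t - t := (hg i).sub continuous_id
    refine ⟨_, mem_nhdsWithin_of_mem_nhds (hcont.tendsto s (Ioi_mem_nhds
      (half_lt_self (sub_pos.2 hi)))), (g i s - s) / 2, half_pos (sub_pos.2 hi),
      fun t ht => ⟨i, ?_⟩⟩
    have : (g i s - s) / 2 < g i t - t := ht
    linarith

variable [Fintype ι]

lemma exists_two_mul_exp_le_markovOp (hw : ∀ i, 0 < w i) (hg : ∀ i, Continuous (g i))
    (hZ : IsCompact Z) (hup : ∀ s ∈ Z, ∃ i, s < g i s) :
    ∃ Λ > 0, ∀ s ∈ Z, 2 * Real.exp (Λ * s) ≤ markovOp w g (fun t => Real.exp (Λ * t)) s := by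
  obtain ⟨δ, hδ, hgain⟩ := exists_pos_forall_exists_add_le hg hZ hup
  have hlarge : ∀ᶠ Λ : ℝ in atTop, ∀ i, 2 ≤ w i * (Λ * δ) := eventually_all.2 fun i =>
    ((tendsto_id.atTop_mul_const hδ).const_mul_atTop (hw i)).eventually_ge_atTop 2
  obtain ⟨Λ, hΛ, hΛpos⟩ := (hlarge.and (eventually_gt_atTop 0)).exists
  refine ⟨Λ, hΛpos, fun s hs => ?_⟩
  obtain ⟨i, hi⟩ := hgain s hs
  have hexp : Λ * δ * Real.exp (Λ * s) ≤ Real.exp (Λ * g i s) :=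
    calc Λ * δ * Real.exp (Λ * s) ≤ Real.exp (Λ * δ) * Real.exp (Λ * s) :=
          mul_le_mul_of_nonneg_right (by linarith [Real.add_one_le_exp (Λ * δ)]) (Real.exp_pos _).le
      _ = Real.exp (Λ * (s + δ)) := by rw [← Real.exp_add]; ring_nf
      _ ≤ Real.exp (Λ * g i s) := Real.exp_le_exp.2 (mul_le_mul_of_nonneg_left hi hΛpos.le)
  calc 2 * Real.exp (Λ * s) ≤ w i * (Λ * δ) * Real.exp (Λ * s) :=
        mul_le_mul_of_nonneg_right (hΛ i) (Real.exp_pos _).le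
    _ ≤ w i * Real.exp (Λ * g i s) := by
        rw [mul_assoc]; exact mul_le_mul_of_nonneg_left hexp (hw i).le
    _ ≤ markovOp w g (fun t => Real.exp (Λ * t)) s :=
        Finset.single_le_sum (f := fun i => w i * Real.exp (Λ * g i s))
          (fun j _ => mul_nonneg (hw j).le (Real.exp_pos _).le) (Finset.mem_univ i)

-- Adding a small multiple of `ψ` turns `u` into a function with a strict mean gain.
lemma le_of_exit_le_of_two_mul_le_markovOp {a b K M T : ℝ} {u ψ : ℝ → ℝ}
    (hw : IsProbWeight w) (hψpos : ∀ s, 0 < ψ s) (hψ : Monotone ψ)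
    (hgain : ∀ s ∈ Icc a b, 2 * ψ s ≤ markovOp w g ψ s) (hK : ∀ i s, g i s ≤ s + K)
    (hM : ∀ s ∈ Icc a b, u s ≤ M) (hu : ∀ s ∈ Icc a b, u s ≤ markovOp w g u s)
    (hright : ∀ s ∈ Icc a b, ∀ i, b < g i s → u (g i s) ≤ T)
    (hleft : ∀ T' ≥ T, (∀ s ∈ Icc a b, u s ≤ T') →
      ∀ s ∈ Icc a b, ∀ i, g i s < a → u (g i s) ≤ T') :
    ∀ s ∈ Icc a b, u s ≤ T := by
  by_contra! hcon
  obtain ⟨s₁, hs₁, hTs₁⟩ := hcon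
  set T' := sSup (u '' Icc a b)
  have hle : ∀ s ∈ Icc a b, u s ≤ T' := fun s hs =>
    le_csSup ⟨M, forall_mem_image.2 hM⟩ (mem_image_of_mem u hs)
  have hTT' : T < T' := hTs₁.trans_le (hle s₁ hs₁)
  set η := (T' - T) / ψ (b + K)
  have hη : 0 < η := div_pos (sub_pos.2 hTT') (hψpos _)
  set v : ℝ → ℝ := u + η • ψ with hv
  have hv_apply : ∀ s, v s = u s + η * ψ s := fun s => rfl
  obtain ⟨s, hs, i, hi⟩ := hw.exists_sSup_lt_of_add_le_markovOp (f := v) (γ := g)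
    ⟨s₁, hs₁⟩ (mul_pos hη (hψpos a)) fun s hs => by
      rw [hv, map_add, map_smul]
      simp only [Pi.add_apply, Pi.smul_apply, smul_eq_mul]
      linarith [hu s hs, mul_le_mul_of_nonneg_left (hgain s hs) hη.le,
        mul_le_mul_of_nonneg_left (hψ hs.1) hη.le]
  have hsup : ∀ t ∈ Icc a b, v t ≤ sSup (v '' Icc a b) := fun t ht =>
    le_csSup ⟨M + η * ψ b, forall_mem_image.2 fun s hs =>
      add_le_add (hM s hs) (mul_le_mul_of_nonneg_left (hψ hs.2) hη.le)⟩ (mem_image_of_mem v ht)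
  have hT'sup : T' + η * ψ a ≤ sSup (v '' Icc a b) := by
    refine le_sub_iff_add_le.1 (csSup_le ⟨_, mem_image_of_mem u hs₁⟩ ?_)
    rintro _ ⟨t, ht, rfl⟩
    linarith [hsup t ht, hv_apply t, mul_le_mul_of_nonneg_left (hψ ht.1) hη.le]
  rw [hv_apply] at hi
  rcases lt_or_ge (g i s) a with hga | hga
  · linarith [hleft T' hTT'.le hle s hs i hga, mul_le_mul_of_nonneg_left (hψ hga.le) hη.le]
  rcases lt_or_ge b (g i s) with hgb | hgb
  · have hηψ : η * ψ (b + K) = T' - T := div_mul_cancel₀ _ (hψpos _).ne'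
    have hgK : g i s ≤ b + K := (hK i s).trans (add_le_add_left hs.2 K)
    linarith [hright s hs i hgb, mul_le_mul_of_nonneg_left (hψ hgK) hη.le, mul_pos hη (hψpos a)]
  · exact (hsup _ ⟨hga, hgb⟩).not_gt hi

end CompactGain

namespace EndWalk

variable {ι X : Type*} [Fintype ι] {w m : ι → ℝ} {g : ι → ℝ → ℝ} {B K : ℝ}

section Extension

variable {γ : ι → X → X} {π : X → ℝ} {E : Set X} {G : X → ℝ} {r b c : ℝ}

lemma le_sub_mul_barrier_add (S : EndWalk w m g B K) (hπ : ∀ i, Semiconj π (γ i) (g i))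
    (hE : ∀ i, MapsTo (γ i) E E) (hr : 0 ≤ r) (hc : 0 < c)
    (hGb : ∀ x ∈ E, r - K ≤ π x → b ≤ G x)
    (hG : ∀ x ∈ E, r < π x → markovOp w γ G x ≤ G x - c)
    {U W : ℝ → ℝ} {C η L : ℝ} (hU : IsBarrier w g r U W C) (hη : 0 < η) (hηC : η * C ≤ c / 2)
    (hL : 0 ≤ L) {x : X} (hx : x ∈ E) (hxr : r < π x) :
    b ≤ G x - L * U (π x) + η * W (π x) := by
  by_contra! hlt
  set Z := E ∩ {y | r < π y}
  set f : X → ℝ := L • (U ∘ π) - η • (W ∘ π) - G with hf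
  have hf_apply : ∀ y, f y = L * U (π y) - η * W (π y) - G y := fun y => rfl
  have hgain : ∀ y ∈ Z, f y + c / 2 ≤ markovOp w γ f y := fun y hy => by
    rw [hf, map_sub, map_sub, map_smul, map_smul, markovOp_comp_of_semiconj hπ,
      markovOp_comp_of_semiconj hπ]
    simp only [Pi.sub_apply, Pi.smul_apply, comp_apply, smul_eq_mul]
    linarith [hG y hy.1 hy.2, mul_le_mul_of_nonneg_left (hU.le_markovOp (π y)) hL,
      mul_le_mul_of_nonneg_left (hU.markovOp_dominant_le (π y) (hr.trans hy.2.le)) hη.le]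
  have hbdd : BddAbove (f '' Z) := by
    obtain ⟨a, ha⟩ := hU.bddBelow_dominant_sub (L / η) (by positivity)
    refine ⟨-(η * a) - b, ?_⟩
    rintro _ ⟨y, hy, rfl⟩
    have hWU := mul_le_mul_of_nonneg_left (ha (π y)) hη.le
    rw [mul_sub, ← mul_assoc, mul_div_cancel₀ _ hη.ne'] at hWU
    have hyr : r < π y := hy.2
    linarith [hf_apply y, hGb y hy.1 (by linarith [S.K_pos])]
  have hxZ : x ∈ Z := ⟨hx, hxr⟩
  obtain ⟨y, hy, i, hi⟩ := S.isProbWeight.exists_sSup_lt_of_add_le_markovOp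
    ⟨x, hxZ⟩ (half_pos hc) hgain
  have hsup : ∀ z ∈ Z, f z ≤ sSup (f '' Z) := fun z hz => le_csSup hbdd (mem_image_of_mem f hz)
  rcases lt_or_ge r (π (γ i y)) with hexit | hexit
  · exact hi.not_ge (hsup _ ⟨hE i hy.1, hexit⟩)
  · have hstay : r - K ≤ π (γ i y) := by
      have hyr : r < π y := hy.2
      rw [(hπ i).eq]
      linarith [S.sub_le i (π y)]
    have := hGb _ (hE i hy.1) hstay
    have := mul_nonneg hη.le (hU.nonneg_dominant (π (γ i y)))
    have := hf_apply (γ i y)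
    rw [hU.eq_zero _ hexit] at this
    linarith [hsup x hxZ, hf_apply x]

lemma not_forall_markovOp_le_sub (S : EndWalk w m g B K) (hπ : ∀ i, Semiconj π (γ i) (g i))
    (hE : ∀ i, MapsTo (γ i) E E) (hunb : ∀ r, ∃ x ∈ E, r < π x) (hc : 0 < c)
    (hGb : ∀ x ∈ E, r - K ≤ π x → b ≤ G x) :
    ¬∀ x ∈ E, r < π x → markovOp w γ G x ≤ G x - c := by
  intro hG
  have hr : r ≤ max r 0 := le_max_left r 0
  obtain ⟨U, W, C, hU⟩ := S.exists_isBarrier S.drift_nonneg (max r 0)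
  have hC := hU.C_nonneg
  obtain ⟨s₀, hs₀⟩ := hU.exists_pos
  obtain ⟨x, hxE, hx⟩ := hunb (max (max r 0) s₀)
  have hηC : c / (2 * (C + 1)) * C ≤ c / 2 := by
    rw [div_mul_eq_mul_div, div_le_div_iff₀ (by positivity) two_pos]
    nlinarith
  have hle := fun L hL => S.le_sub_mul_barrier_add hπ hE (le_max_right r 0) hc
    (fun y hy hry => hGb y hy (by linarith)) (fun y hy hry => hG y hy (hr.trans_lt hry)) hU
    (by positivity) hηC (L := L) hL hxE ((le_max_left _ _).trans_lt hx)
  have hUx : 0 < U (π x) := hs₀.trans_le (hU.monotone ((le_max_right _ _).trans hx.le))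
  obtain ⟨L, hL, hLpos⟩ := (((tendsto_id.atTop_mul_const hUx).eventually_gt_atTop
    (G x + c / (2 * (C + 1)) * W (π x) - b)).and (eventually_ge_atTop 0)).exists
  have := hle L hLpos
  simp only [id] at hL
  linarith

end Extension

variable {a b M T : ℝ} {u : ℝ → ℝ}

lemma le_of_exit_le (S : EndWalk w m g B K) (hM : ∀ s ∈ Icc a b, u s ≤ M)
    (hu : ∀ s ∈ Icc a b, u s ≤ markovOp w g u s)
    (hright : ∀ s ∈ Icc a b, ∀ i, b < g i s → u (g i s) ≤ T)
    (hleft : ∀ T' ≥ T, (∀ s ∈ Icc a b, u s ≤ T') →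
      ∀ s ∈ Icc a b, ∀ i, g i s < a → u (g i s) ≤ T') :
    ∀ s ∈ Icc a b, u s ≤ T := by
  obtain ⟨Λ, hΛ, hgain⟩ := exists_two_mul_exp_le_markovOp S.isProbWeight.pos S.continuous
    (isCompact_Icc (a := a) (b := b)) fun s _ => S.exists_gt s
  exact le_of_exit_le_of_two_mul_le_markovOp S.isProbWeight (fun s => Real.exp_pos (Λ * s))
    (fun s t hst => Real.exp_le_exp.2 (mul_le_mul_of_nonneg_left hst hΛ.le)) hgain S.le_add hM hu
    hright hleft

lemma le_of_forall_exit_le (S : EndWalk w m g B K) (hM : ∀ s ∈ Icc a b, u s ≤ M)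
    (hu : ∀ s ∈ Icc a b, u s ≤ markovOp w g u s)
    (hright : ∀ s ∈ Icc a b, ∀ i, b < g i s → u (g i s) ≤ T)
    (hleft : ∀ s ∈ Icc a b, ∀ i, g i s < a → u (g i s) ≤ T) :
    ∀ s ∈ Icc a b, u s ≤ T :=
  S.le_of_exit_le hM hu hright fun _ hT _ s hs i hi => (hleft s hs i hi).trans hT

end EndWalk

namespace EndWalk

variable {ι : Type*} [Fintype ι] {w m : ι → ℝ} {g : ι → ℝ → ℝ} {B K : ℝ}

lemma le_add_mul_of_superharmonic (S : EndWalk w m g B K) {V D : ℝ → ℝ} {R M T s ε : ℝ}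
    (hVmono : Monotone V) (hVtop : Tendsto V atTop atTop) (hV : ∀ t ≥ R, markovOp w g V t ≤ V t)
    (hM : ∀ t, D t ≤ M) (hD : ∀ t, D t ≤ markovOp w g D t)
    (hT : ∀ t ∈ Icc (R - K) R, D t ≤ T) (hs : R ≤ s) (hε : 0 < ε) :
    D s ≤ T + ε * (V s - V (R - K)) := by
  obtain ⟨b, hb, hsb⟩ := (((hVtop.const_mul_atTop hε).eventually_ge_atTop
    (M - T + ε * V (R - K))).and (eventually_ge_atTop s)).exists
  have hle := S.le_of_forall_exit_le (a := R) (b := b) (u := D - ε • V) (M := M - ε * V R)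
    (T := T - ε * V (R - K)) (fun t ht => ?_) (fun t ht => ?_) (fun t _ i hi => ?_)
    (fun t ht i hi => ?_) s ⟨hs, hsb⟩
  · simp only [Pi.sub_apply, Pi.smul_apply, smul_eq_mul] at hle
    linarith
  · simp only [Pi.sub_apply, Pi.smul_apply, smul_eq_mul]
    linarith [hM t, mul_le_mul_of_nonneg_left (hVmono ht.1) hε.le]
  · simp only [map_sub, map_smul, Pi.sub_apply, Pi.smul_apply, smul_eq_mul]
    linarith [hD t, mul_le_mul_of_nonneg_left (hV t ht.1) hε.le]
  · simp only [Pi.sub_apply, Pi.smul_apply, smul_eq_mul]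
    linarith [hM (g i t), mul_le_mul_of_nonneg_left (hVmono hi.le) hε.le]
  · have hstay : R - K ≤ g i t := (sub_le_sub_right ht.1 K).trans (S.sub_le i t)
    simp only [Pi.sub_apply, Pi.smul_apply, smul_eq_mul]
    linarith [hT _ ⟨hstay, hi.le⟩, mul_le_mul_of_nonneg_left (hVmono hstay) hε.le]

-- A critical end is recurrent: a bounded subharmonic function cannot grow towards it.
lemma exists_forall_le_of_le_on_window (S : EndWalk w m g B K) (hm : ∑ i, w i * m i ≤ 0) :
    ∃ R₀, ∀ R ≥ R₀, ∀ (D : ℝ → ℝ) (M T : ℝ), (∀ s, D s ≤ M) → (∀ s, D s ≤ markovOp w g D s) →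
      (∀ s ∈ Icc (R - K) R, D s ≤ T) → ∀ s ≥ R, D s ≤ T := by
  obtain ⟨A, hA, R₀, hR₀⟩ := S.exists_superharmonic_sub_exp hm
  refine ⟨R₀, fun R hR D M T hM hD hT s hs => ?_⟩
  set V : ℝ → ℝ := fun s => s - A * Real.exp (-s)
  have hVmono : Monotone V := fun s t hst => sub_le_sub hst
    (mul_le_mul_of_nonneg_left (Real.exp_le_exp.2 (neg_le_neg hst)) hA)
  have hVtop : Tendsto V atTop atTop :=
    tendsto_id.atTop_add (by simpa using (tendsto_const_mul_exp_neg A).neg)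
  have hlim : Tendsto (fun ε => T + ε * (V s - V (R - K))) (𝓝[>] 0) (𝓝 T) := by
    have : Continuous fun ε => T + ε * (V s - V (R - K)) := by fun_prop
    simpa using (this.tendsto 0).mono_left nhdsWithin_le_nhds
  exact ge_of_tendsto hlim (eventually_mem_nhdsWithin.mono fun ε hε =>
    S.le_add_mul_of_superharmonic hVmono hVtop (fun t ht => hR₀ A le_rfl t (hR.trans ht))
      hM hD hT hs hε)

section Window

variable {U W F : ℝ → ℝ} {C : ℝ}

lemma mul_barrier_le_sub (S : EndWalk w m g B K) (hU : IsBarrier w g 0 U W C) (hF : Monotone F)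
    (hFP : markovOp w g F = F) {θ T : ℝ} (hθ : 0 ≤ θ) (hθT : θ * U (T + K) ≤ F T - F (-K)) :
    ∀ s ∈ Icc 0 T, θ * U s ≤ F s - F (-K) := by
  have hle := S.le_of_forall_exit_le (a := 0) (b := T) (u := θ • U - F) (M := θ * U T - F 0)
    (T := -F (-K)) (fun s hs => ?_) (fun s _ => ?_) (fun s hs i hi => ?_) (fun s hs i hi => ?_)
  · intro s hs
    have := hle s hs
    simp only [Pi.sub_apply, Pi.smul_apply, smul_eq_mul] at this
    linarith
  · exact sub_le_sub (mul_le_mul_of_nonneg_left (hU.monotone hs.2) hθ) (hF hs.1)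
  · rw [map_sub, map_smul, hFP]
    exact sub_le_sub_right (mul_le_mul_of_nonneg_left (hU.le_markovOp s) hθ) _
  · have hgK : g i s ≤ T + K := (S.le_add i s).trans (add_le_add_left hs.2 K)
    simp only [Pi.sub_apply, Pi.smul_apply, smul_eq_mul]
    linarith [mul_le_mul_of_nonneg_left (hU.monotone hgK) hθ, hF hi.le]
  · have hgK : -K ≤ g i s := by linarith [S.sub_le i s, hs.1]
    simp only [Pi.sub_apply, Pi.smul_apply, smul_eq_mul, hU.eq_zero _ hi.le, mul_zero, zero_sub]
    exact neg_le_neg (hF hgK)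

lemma exists_barrier_comparison (S : EndWalk w m g B K) (hU : IsBarrier w g 0 U W C)
    (hF : Monotone F) (hFP : markovOp w g F = F) :
    ∃ s₀ ≥ 0, ∃ C₀ ≥ 0, ∀ T ≥ s₀, ∃ θ ∈ Icc 0 C₀, θ * U (T + K) = F T - F (-K) ∧
      ∀ s ∈ Icc 0 T, θ * U s ≤ F s - F (-K) := by
  have hK := S.K_pos
  obtain ⟨s₀, hs₀⟩ := hU.exists_pos
  have hs₀0 : 0 ≤ s₀ := le_of_not_gt fun h => hs₀.ne' (hU.eq_zero s₀ h.le)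
  have hinc : ∀ T ≥ s₀, 0 ≤ F T - F (-K) := fun T hT => sub_nonneg.2 (hF (by linarith))
  refine ⟨s₀, hs₀0, (F s₀ - F (-K)) / U s₀, div_nonneg (hinc s₀ le_rfl) hs₀.le, fun T hT => ?_⟩
  have hUT : 0 < U (T + K) := hs₀.trans_le (hU.monotone (by linarith))
  have hθ : 0 ≤ (F T - F (-K)) / U (T + K) := div_nonneg (hinc T hT) hUT.le
  have hθT : (F T - F (-K)) / U (T + K) * U (T + K) = F T - F (-K) := div_mul_cancel₀ _ hUT.ne'
  have hle := S.mul_barrier_le_sub hU hF hFP hθ hθT.le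
  exact ⟨_, ⟨hθ, (le_div_iff₀ hs₀).2 (hle s₀ ⟨hs₀0, hT⟩)⟩, hθT, hle⟩

lemma exists_add_sub_le (S : EndWalk w m g B K) (hF : Monotone F) (hFP : markovOp w g F = F) :
    ∃ b, ∀ s ≥ 0, F (s + K) - F s ≤ b := by
  have hK := S.K_pos
  obtain ⟨U, W, C, hU⟩ := S.exists_isBarrier S.drift_nonneg 0
  obtain ⟨s₀, -, C₀, hC₀, hcomp⟩ := S.exists_barrier_comparison hU hF hFP
  refine ⟨max (C₀ * (C * (2 * K))) (F (s₀ + K) - F 0), fun s hs => ?_⟩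
  rcases le_total s₀ s with h | h
  · obtain ⟨θ, hθ, hθT, hθle⟩ := hcomp (s + K) (by linarith)
    have hUs : U (s + K + K) - U s ≤ C * (2 * K) :=
      (hU.sub_le s (s + K + K) (by linarith)).trans_eq (by ring)
    calc F (s + K) - F s ≤ θ * (U (s + K + K) - U s) := by
          linarith [hθle s ⟨hs, by linarith⟩]
      _ ≤ C₀ * (C * (2 * K)) :=
          mul_le_mul hθ.2 hUs (sub_nonneg.2 (hU.monotone (by linarith))) hC₀
      _ ≤ _ := le_max_left _ _
  · exact (sub_le_sub (hF (by linarith)) (hF hs)).trans (le_max_right _ _)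

lemma exists_forall_le_of_drift_pos (S : EndWalk w m g B K) (hF : Monotone F)
    (hFP : markovOp w g F = F) (hm : 0 < ∑ i, w i * m i) : ∃ b, ∀ s, F s ≤ b := by
  obtain ⟨U, W, C, hU, b, hb⟩ := S.exists_isBarrier_of_drift_pos hm 0
  obtain ⟨s₀, -, C₀, hC₀, hcomp⟩ := S.exists_barrier_comparison hU hF hFP
  refine ⟨F (-K) + C₀ * b, fun s => ?_⟩
  obtain ⟨θ, hθ, hθT, -⟩ := hcomp (max s s₀) (le_max_right _ _)
  have : θ * U (max s s₀ + K) ≤ C₀ * b := mul_le_mul hθ.2 (hb _) (hU.nonneg _) hC₀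
  linarith [hF (le_max_left s s₀)]

end Window

end EndWalk

/-! ### Differences of monotone harmonic functions attaining their bounds -/

section Variation

variable {Y : Type*} [LinearOrder Y] {D H₁ H₂ : Y → ℝ} {E : Set Y} {p x y : Y}

lemma eVariationOn_sub_le_eVariationOn_add (h₁ : Monotone H₁) (h₂ : Monotone H₂) (s : Set Y) :
    eVariationOn (H₁ - H₂) s ≤ eVariationOn (H₁ + H₂) s := by
  refine iSup_mono fun u => Finset.sum_le_sum fun k _ => ?_
  have hu := u.2.2.1 k.le_succ
  have hincr₁ := h₁ hu
  have hincr₂ := h₂ hu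
  rw [edist_dist, edist_dist, Real.dist_eq, Real.dist_eq]
  refine ENNReal.ofReal_le_ofReal ((abs_le.2 ⟨?_, ?_⟩).trans (le_abs_self _)) <;>
    simp only [Pi.add_apply, Pi.sub_apply, Nat.succ_eq_add_one] at * <;> linarith

lemma eVariationOn_sub_le_ofReal (h₁ : Monotone H₁) (h₂ : Monotone H₂) (hx : x ∈ E) (hy : y ∈ E) :
    eVariationOn (H₁ - H₂) (E ∩ Icc x y) ≤ ENNReal.ofReal ((H₁ + H₂) y - (H₁ + H₂) x) :=
  (eVariationOn_sub_le_eVariationOn_add h₁ h₂ _).trans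
    (((h₁.add h₂).monotoneOn E).eVariationOn_eq hx hy).le

lemma locallyBoundedVariationOn_sub (h₁ : Monotone H₁) (h₂ : Monotone H₂) :
    LocallyBoundedVariationOn (H₁ - H₂) E := fun _ _ hx hy =>
  ((eVariationOn_sub_le_ofReal h₁ h₂ hx hy).trans_lt ENNReal.ofReal_lt_top).ne

lemma monotoneOn_add_sub_variationOnFromTo (h₁ : Monotone H₁) (h₂ : Monotone H₂) (hp : p ∈ E) :
    MonotoneOn (H₁ + H₂ - variationOnFromTo (H₁ - H₂) E p) E := fun x hx y hy hxy => by
  have hvar := variationOnFromTo.sub_right (locallyBoundedVariationOn_sub h₁ h₂) hp hy hx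
  rw [variationOnFromTo.eq_of_le _ _ hxy] at hvar
  have hle := ENNReal.toReal_le_of_le_ofReal (sub_nonneg.2 (h₁.add h₂ hxy))
    (eVariationOn_sub_le_ofReal h₁ h₂ hx hy)
  simp only [Pi.sub_apply, Pi.add_apply] at hle ⊢
  linarith

lemma variationOnFromTo_le_comp {γ : Y → Y} (hD : LocallyBoundedVariationOn D E)
    (hγ : Monotone γ) (hE : MapsTo γ E E) (hDγ : EqOn (D ∘ γ) D E) (hx : x ∈ E) (hy : y ∈ E)
    (hxy : x ≤ y) : variationOnFromTo D E x y ≤ variationOnFromTo D E (γ x) (γ y) := by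
  rw [variationOnFromTo.eq_of_le _ _ hxy, variationOnFromTo.eq_of_le _ _ (hγ hxy)]
  refine ENNReal.toReal_mono (hD _ _ (hE hx) (hE hy)) ?_
  rw [← eVariationOn.eq_of_eqOn (hDγ.mono inter_subset_left)]
  exact eVariationOn.comp_le_of_monotoneOn D γ (hγ.monotoneOn _) fun z hz =>
    ⟨hE hz.1, hγ hz.2.1, hγ hz.2.2⟩

end Variation

section MaximumPrinciple

variable {ι X : Type*} [Fintype ι] {w : ι → ℝ} {γ : ι → X → X} {f : X → ℝ} {x y : X}

lemma IsProbWeight.eq_of_sum_mul_eq (hw : IsProbWeight w) {a : ι → ℝ} {c : ℝ}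
    (hle : ∀ i, a i ≤ c) (hsum : ∑ i, w i * a i = c) (i : ι) : a i = c := by
  have hterm := (Finset.sum_eq_sum_iff_of_le fun j _ =>
    mul_le_mul_of_nonneg_left (hle j) (hw.pos j).le).1 (hsum.trans (hw.sum_mul_const c).symm)
  exact mul_left_cancel₀ (hw.pos i).ne' (hterm i (Finset.mem_univ i))

lemma IsProbWeight.mapsTo_argmax (hw : IsProbWeight w) (hf : markovOp w γ f = f)
    (hx : ∀ y, f y ≤ f x) (i : ι) : MapsTo (γ i) {y | f y = f x} {y | f y = f x} := fun y hy =>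
  hw.eq_of_sum_mul_eq (fun j => hx (γ j y)) ((congr_fun hf y).trans hy) i

lemma IsProbWeight.comp_sub_comp_eq (hw : IsProbWeight w) (hx : markovOp w γ f x = f x)
    (hy : markovOp w γ f y = f y) (hle : ∀ i, f y - f x ≤ f (γ i y) - f (γ i x)) (i : ι) :
    f (γ i y) - f (γ i x) = f y - f x := by
  have hsum : ∑ j, w j * (f (γ j x) - f (γ j y)) = f x - f y := by
    rw [← hx, ← hy, markovOp_apply, markovOp_apply, ← Finset.sum_sub_distrib]
    simp only [mul_sub]
  linarith [hw.eq_of_sum_mul_eq (fun j => by linarith [hle j]) hsum i]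

end MaximumPrinciple

/-- A random walk on `ℝ` with nonnegative mean drift towards both ends, one of whose steps moves
points near either end outwards. The left end is described by conjugating with `s ↦ -s`. -/
structure TwoSidedWalk {ι : Type*} [Fintype ι] (w mp mm : ι → ℝ) (g : ι → ℝ → ℝ) (B K : ℝ) :
    Prop where
  right : EndWalk w mp g B K
  left : EndWalk w mm (fun i s => -g i (-s)) B K
  exists_pos : ∃ i, 0 < mp i ∧ 0 < mm i

section Invariant

variable {ι X : Type*} [Fintype ι] {w m : ι → ℝ} {g : ι → ℝ → ℝ} {B K : ℝ}
  {γ : ι → X → X} {π : X → ℝ} {E : Set X}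

lemma EndWalk.exists_lt_of_mapsTo (S : EndWalk w m g B K) (hπ : ∀ i, Semiconj π (γ i) (g i))
    (hE : ∀ i, MapsTo (γ i) E E) (hne : E.Nonempty) (r : ℝ) : ∃ x ∈ E, r < π x := by
  by_contra! hr
  have hlub := isLUB_csSup (hne.image π) ⟨r, forall_mem_image.2 hr⟩
  obtain ⟨i, hi⟩ := S.exists_gt (sSup (π '' E))
  obtain ⟨_, ⟨x, hx, rfl⟩, hlt⟩ := ((hlub.frequently_mem (hne.image π)).and_eventually
    (mem_nhdsWithin_of_mem_nhds ((S.continuous i).tendsto _ (Ioi_mem_nhds hi)))).exists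
  refine (hlub.1 (mem_image_of_mem π (hE i hx))).not_gt ?_
  rw [(hπ i).eq]
  exact hlt

lemma AsympTranslation.exists_forall_add_half_le (S : AsympTranslation w m g B K) {i : ι}
    (hi : 0 < m i) : ∃ T, ∀ s ≥ T, s + m i / 2 ≤ g i s := by
  obtain ⟨T, hT⟩ := eventually_atTop.1
    ((tendsto_const_mul_exp_neg B).eventually_le_const (half_pos hi))
  exact ⟨T, fun s hs => by linarith [hT s hs, (abs_le.1 (S.abs_sub_sub_le i s)).1]⟩

end Invariant

lemma exists_lt_iterate_of_add_le {f : ℝ → ℝ} {T δ : ℝ} (hδ : 0 < δ)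
    (hf : ∀ s ≥ T, s + δ ≤ f s) {s : ℝ} (hs : T ≤ s) (r : ℝ) : ∃ k : ℕ, r < f^[k] s := by
  have hiter : ∀ k : ℕ, s + k * δ ≤ f^[k] s := fun k => by
    induction k with
    | zero => simp
    | succ k ih =>
      rw [iterate_succ_apply']
      push_cast
      linarith [hf _ (hs.trans ((le_add_of_nonneg_right (by positivity)).trans ih))]
  obtain ⟨k, hk⟩ := exists_nat_gt ((r - s) / δ)
  rw [div_lt_iff₀ hδ] at hk
  exact ⟨k, by linarith [hiter k]⟩

lemma semiconj_neg {ι X : Type*} {g : ι → ℝ → ℝ} {γ : ι → X → X} {π : X → ℝ}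
    (hπ : ∀ i, Semiconj π (γ i) (g i)) (i : ι) :
    Semiconj (-π) (γ i) fun s => -g i (-s) := fun x => by
  simp only [Pi.neg_apply, (hπ i).eq, neg_neg]

namespace TwoSidedWalk

variable {ι X Y : Type*} [Fintype ι] [LinearOrder Y] {w mp mm : ι → ℝ} {g : ι → ℝ → ℝ} {B K : ℝ}

protected lemma neg (S : TwoSidedWalk w mp mm g B K) :
    TwoSidedWalk w mm mp (fun i s => -g i (-s)) B K where
  right := S.left
  left := by simpa only [neg_neg] using S.right
  exists_pos := S.exists_pos.imp fun _ h => h.symm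

section Defect

variable {γ : ι → X → X} {π : X → ℝ} {E : Set X} {G : X → ℝ}

lemma le_markovOp_of_monotone_defect (S : TwoSidedWalk w mp mm g B K)
    (hπ : ∀ i, Semiconj π (γ i) (g i)) (hE : ∀ i, MapsTo (γ i) E E)
    (hG : ∀ x ∈ E, ∀ y ∈ E, π x < π y → G x ≤ G y)
    (hdefect : ∀ x ∈ E, ∀ y ∈ E, π x < π y →
      G x - markovOp w γ G x ≤ G y - markovOp w γ G y) {x : X} (hx : x ∈ E) :
    G x ≤ markovOp w γ G x := by
  by_contra! hlt
  obtain ⟨z, hz, hzx⟩ := S.left.exists_lt_of_mapsTo (semiconj_neg hπ) hE ⟨x, hx⟩ (-(π x - K))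
  rw [Pi.neg_apply, neg_lt_neg_iff] at hzx
  exact S.right.not_forall_markovOp_le_sub hπ hE (S.right.exists_lt_of_mapsTo hπ hE ⟨x, hx⟩)
    (sub_pos.2 hlt) (fun y hy hxy => hG z hz y hy (hzx.trans_le hxy))
    fun y hy hxy => by linarith [hdefect x hx y hy hxy]

lemma eqOn_markovOp_of_monotone_defect (S : TwoSidedWalk w mp mm g B K)
    (hπ : ∀ i, Semiconj π (γ i) (g i)) (hE : ∀ i, MapsTo (γ i) E E)
    (hG : ∀ x ∈ E, ∀ y ∈ E, π x < π y → G x ≤ G y)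
    (hdefect : ∀ x ∈ E, ∀ y ∈ E, π x < π y →
      G x - markovOp w γ G x ≤ G y - markovOp w γ G y) :
    EqOn (markovOp w γ G) G E := fun x hx => by
  refine le_antisymm ?_ (S.le_markovOp_of_monotone_defect hπ hE hG hdefect hx)
  have hneg := S.neg.le_markovOp_of_monotone_defect (G := -G) (semiconj_neg hπ) hE
    (fun y hy z hz h => neg_le_neg (hG z hz y hy (neg_lt_neg_iff.1 h)))
    (fun y hy z hz h => ?_) hx
  · rw [map_neg] at hneg
    exact neg_le_neg_iff.1 hneg
  · have := hdefect z hz y hy (neg_lt_neg_iff.1 h)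
    simp only [map_neg, Pi.neg_apply]
    linarith

end Defect

variable {γ : ι → Y → Y} {π : Y → ℝ} {E : Set Y} {n H₁ H₂ : Y → ℝ}

-- The common increment `n ∘ γ i - n` is nonnegative near `+∞` and nonpositive near `-∞`.
lemma exists_comp_eq_of_comp_sub_comp_eq (S : TwoSidedWalk w mp mm g B K) (hπmono : Monotone π)
    (hπ : ∀ i, Semiconj π (γ i) (g i)) (hE : ∀ i, MapsTo (γ i) E E) (hne : E.Nonempty)
    (hn : MonotoneOn n E)
    (hincr : ∀ i, ∀ x ∈ E, ∀ y ∈ E, x ≤ y → n (γ i y) - n (γ i x) = n y - n x) :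
    ∃ i T, ∃ δ > 0, ∀ s ≥ T, s + δ ≤ g i s ∧ ∀ x ∈ E, π x = s → n (γ i x) = n x := by
  obtain ⟨i, hip, him⟩ := S.exists_pos
  obtain ⟨T, hT⟩ := S.right.exists_forall_add_half_le hip
  obtain ⟨T', hT'⟩ := S.left.exists_forall_add_half_le him
  obtain ⟨z, hz, hTz⟩ := S.left.exists_lt_of_mapsTo (semiconj_neg hπ) hE hne T'
  have hzi : γ i z ≤ z := (hπmono.reflect_lt (by
    have := hT' (-π z) hTz.le
    rw [(hπ i).eq]
    simp only [neg_neg] at this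
    linarith)).le
  refine ⟨i, T, _, half_pos hip, fun s hs => ⟨hT s hs, ?_⟩⟩
  rintro x hx rfl
  have hxi : x ≤ γ i x := (hπmono.reflect_lt (by
    rw [(hπ i).eq]
    linarith [hT (π x) hs])).le
  have := hn hx (hE i hx) hxi
  have := hn (hE i hz) hz hzi
  rcases le_total x z with h | h
  · linarith [hincr i x hx z hz h]
  · linarith [hincr i z hz x hx h]

lemma exists_forall_eq_of_comp_sub_comp_eq (S : TwoSidedWalk w mp mm g B K) (hπmono : Monotone π)
    (hπ : ∀ i, Semiconj π (γ i) (g i)) (hE : ∀ i, MapsTo (γ i) E E) (hne : E.Nonempty)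
    (hn : MonotoneOn n E)
    (hincr : ∀ i, ∀ x ∈ E, ∀ y ∈ E, x ≤ y → n (γ i y) - n (γ i x) = n y - n x) :
    ∃ T c, ∀ x ∈ E, T < π x → n x = c := by
  obtain ⟨i, T, δ, hδ, hT⟩ := S.exists_comp_eq_of_comp_sub_comp_eq hπmono hπ hE hne hn hincr
  obtain ⟨y, hy, hTy⟩ := S.right.exists_lt_of_mapsTo hπ hE hne T
  have hiter : ∀ k : ℕ, (γ i)^[k] y ∈ E ∧ T ≤ π ((γ i)^[k] y) ∧ n ((γ i)^[k] y) = n y :=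
      fun k => by
    induction k with
    | zero => exact ⟨hy, hTy.le, rfl⟩
    | succ k ih =>
      obtain ⟨hmem, hTk, hnk⟩ := ih
      rw [iterate_succ_apply']
      refine ⟨hE i hmem, ?_, ((hT _ hTk).2 _ hmem rfl).trans hnk⟩
      rw [(hπ i).eq]
      linarith [(hT _ hTk).1]
  refine ⟨π y, n y, fun x hx hyx => le_antisymm ?_ (hn hy hx (hπmono.reflect_lt hyx).le)⟩
  obtain ⟨k, hk⟩ := exists_lt_iterate_of_add_le hδ (fun s hs => (hT s hs).1) hTy.le (π x)
  rw [← ((hπ i).iterate_right k).eq] at hk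
  exact (hn hx (hiter k).1 (hπmono.reflect_lt hk).le).trans_eq (hiter k).2.2

lemma variationOnFromTo_comp_sub_comp_eq (S : TwoSidedWalk w mp mm g B K) (hπmono : Monotone π)
    (hπ : ∀ i, Semiconj π (γ i) (g i)) (hγ : ∀ i, Monotone (γ i)) (hE : ∀ i, MapsTo (γ i) E E)
    (h₁ : Monotone H₁) (h₂ : Monotone H₂) (hP₁ : markovOp w γ H₁ = H₁)
    (hP₂ : markovOp w γ H₂ = H₂) (hD : ∀ i, EqOn ((H₁ - H₂) ∘ γ i) (H₁ - H₂) E)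
    {p : Y} (hp : p ∈ E) (hn : n = variationOnFromTo (H₁ - H₂) E p) (i : ι) {x y : Y}
    (hx : x ∈ E) (hy : y ∈ E) (hxy : x ≤ y) : n (γ i y) - n (γ i x) = n y - n x := by
  have hloc : LocallyBoundedVariationOn (H₁ - H₂) E := locallyBoundedVariationOn_sub h₁ h₂
  have hincr : ∀ x ∈ E, ∀ y ∈ E, x ≤ y → ∀ i, n y - n x ≤ n (γ i y) - n (γ i x) :=
    fun x hx y hy hxy i => by
      rw [hn, variationOnFromTo.sub_right hloc hp hy hx,
        variationOnFromTo.sub_right hloc hp (hE i hy) (hE i hx)]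
      exact variationOnFromTo_le_comp hloc (hγ i) (hE i) (hD i) hx hy hxy
  have hPG : markovOp w γ (H₁ + H₂ - n) = H₁ + H₂ - markovOp w γ n := by
    rw [map_sub, map_add, hP₁, hP₂]
  have hharm : ∀ z ∈ E, markovOp w γ n z = n z := fun z hz => by
    have heq := S.eqOn_markovOp_of_monotone_defect (G := H₁ + H₂ - n) hπ hE
      (fun x hx y hy h =>
        hn ▸ monotoneOn_add_sub_variationOnFromTo h₁ h₂ hp hx hy (hπmono.reflect_lt h).le)
      (fun x hx y hy h => ?_) hz
    · rw [hPG] at heq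
      exact sub_right_injective heq
    · have hP : n y - n x ≤ markovOp w γ n y - markovOp w γ n x := by
        simp only [markovOp_apply, ← Finset.sum_sub_distrib, ← mul_sub]
        exact S.right.isProbWeight.le_markovOp (f := id) (γ := fun i _ => n (γ i y) - n (γ i x))
          (x := 0) (hincr x hx y hy (hπmono.reflect_lt h).le)
      simp only [hPG, Pi.sub_apply, Pi.add_apply]
      linarith
  exact S.right.isProbWeight.comp_sub_comp_eq (hharm x hx) (hharm y hy) (hincr x hx y hy hxy) i

lemma eq_of_isMax_of_isMin (S : TwoSidedWalk w mp mm g B K) (hπmono : Monotone π)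
    (hπ : ∀ i, Semiconj π (γ i) (g i)) (hγ : ∀ i, Monotone (γ i))
    (h₁ : Monotone H₁) (h₂ : Monotone H₂) (hP₁ : markovOp w γ H₁ = H₁)
    (hP₂ : markovOp w γ H₂ = H₂) {p q : Y} (hp : ∀ y, (H₁ - H₂) y ≤ (H₁ - H₂) p)
    (hq : ∀ y, (H₁ - H₂) q ≤ (H₁ - H₂) y) : (H₁ - H₂) p = (H₁ - H₂) q := by
  set D := H₁ - H₂ with hD
  have hPD : markovOp w γ D = D := by rw [hD, map_sub, hP₁, hP₂]
  have hEp := S.right.isProbWeight.mapsTo_argmax hPD hp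
  have hEq : ∀ i, MapsTo (γ i) {y | D y = D q} {y | D y = D q} := fun i => by
    simpa only [Pi.neg_apply, neg_inj] using S.right.isProbWeight.mapsTo_argmax (f := -D)
      (by rw [map_neg, hPD]) (fun y => neg_le_neg (hq y)) i
  set E := {y | D y = D p} ∪ {y | D y = D q}
  have hE : ∀ i, MapsTo (γ i) E E := fun i => (hEp i).union_union (hEq i)
  have hpE : p ∈ E := Or.inl rfl
  have hDγ : ∀ i, EqOn (D ∘ γ i) D E := by
    rintro i y (hy | hy)
    · exact (hEp i hy).trans hy.symm
    · exact (hEq i hy).trans hy.symm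
  have hloc : LocallyBoundedVariationOn D E := locallyBoundedVariationOn_sub h₁ h₂
  obtain ⟨T, c, hc⟩ := S.exists_forall_eq_of_comp_sub_comp_eq hπmono hπ hE ⟨p, hpE⟩
    (variationOnFromTo.monotoneOn hloc hpE) fun i x hx y hy hxy =>
      S.variationOnFromTo_comp_sub_comp_eq hπmono hπ hγ hE h₁ h₂ hP₁ hP₂ hDγ hpE rfl i hx hy hxy
  obtain ⟨a, ha, hTa⟩ := S.right.exists_lt_of_mapsTo hπ hEp ⟨p, rfl⟩ T
  obtain ⟨b, hb, hTb⟩ := S.right.exists_lt_of_mapsTo hπ hEq ⟨q, rfl⟩ T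
  have hab : D a = D b := edist_eq_zero.1 <| variationOnFromTo.edist_zero_of_eq_zero hloc
    (Or.inl ha) (Or.inr hb) <| by
      rw [← variationOnFromTo.sub_right hloc hpE (Or.inr hb) (Or.inl ha),
        hc b (Or.inr hb) hTb, hc a (Or.inl ha) hTa, sub_self]
  exact ha.symm.trans (hab.trans hb)

end TwoSidedWalk

/-! ### One-sided limits of monotone functions -/

section SideLim

/-- The punctured neighbourhoods of `x` on the side given by a sign, `0` standing for the point `x`
itself. -/
def sideFilter : SignType → ℝ → Filter ℝ
  | -1, x => 𝓝[<] x
  | 0, x => pure x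
  | 1, x => 𝓝[>] x

/-- The left limit, value and right limit of `F`, as a function on the lexicographic product of `ℝ`
with the signs. Passing to this lift makes the extrema of a difference of two monotone functions
over a compact interval attained. -/
noncomputable def sideLim (F : ℝ → ℝ) (y : ℝ ×ₗ SignType) : ℝ :=
  match (ofLex y).2 with
  | -1 => leftLim F (ofLex y).1
  | 0 => F (ofLex y).1
  | 1 => rightLim F (ofLex y).1

/-- The action of `g` on the points and sides of `ℝ`. -/
def sideMap (g : ℝ → ℝ) (y : ℝ ×ₗ SignType) : ℝ ×ₗ SignType :=
  toLex (g (ofLex y).1, (ofLex y).2)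

variable {F H₁ H₂ g : ℝ → ℝ}

instance sideFilter_neBot : ∀ (k : SignType) (x : ℝ), (sideFilter k x).NeBot
  | -1, x => inferInstanceAs (𝓝[<] x).NeBot
  | 0, _ => pure_neBot
  | 1, x => inferInstanceAs (𝓝[>] x).NeBot

lemma tendsto_sideLim (hF : Monotone F) :
    ∀ k x, Tendsto F (sideFilter k x) (𝓝 (sideLim F (toLex (x, k))))
  | -1, x => hF.tendsto_leftLim x
  | 0, x => tendsto_pure_nhds F x
  | 1, x => hF.tendsto_rightLim x

lemma tendsto_sideFilter (hmono : StrictMono g) (hcont : Continuous g) :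
    ∀ k x, Tendsto g (sideFilter k x) (sideFilter k (g x))
  | -1, _ => tendsto_nhdsWithin_of_tendsto_nhds_of_eventually_within _
      (hcont.continuousAt.tendsto.mono_left nhdsWithin_le_nhds)
      (eventually_mem_nhdsWithin.mono fun _ hy => hmono hy)
  | 0, x => tendsto_pure_pure g x
  | 1, _ => tendsto_nhdsWithin_of_tendsto_nhds_of_eventually_within _
      (hcont.continuousAt.tendsto.mono_left nhdsWithin_le_nhds)
      (eventually_mem_nhdsWithin.mono fun _ hy => hmono hy)

lemma markovOp_sideLim {ι : Type*} [Fintype ι] {w : ι → ℝ} {g : ι → ℝ → ℝ}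
    (hmono : ∀ i, StrictMono (g i)) (hcont : ∀ i, Continuous (g i)) (hF : Monotone F)
    (hP : markovOp w g F = F) : markovOp w (fun i => sideMap (g i)) (sideLim F) = sideLim F := by
  ext y
  have hlim : Tendsto (markovOp w g F) (sideFilter (ofLex y).2 (ofLex y).1)
      (𝓝 (markovOp w (fun i => sideMap (g i)) (sideLim F) y)) :=
    tendsto_finsetSum _ fun i _ => ((tendsto_sideLim hF _ _).comp
      (tendsto_sideFilter (hmono i) (hcont i) _ _)).const_mul _
  rw [hP] at hlim
  exact tendsto_nhds_unique hlim (tendsto_sideLim hF _ _)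

lemma monotone_sideLim (hF : Monotone F) : Monotone (sideLim F) := by
  have hright : ∀ k x, sideLim F (toLex (x, k)) ≤ rightLim F x
    | -1, _ => hF.leftLim_le_rightLim le_rfl
    | 0, _ => hF.le_rightLim le_rfl
    | 1, _ => le_rfl
  have hleft : ∀ k x, leftLim F x ≤ sideLim F (toLex (x, k))
    | -1, _ => le_rfl
    | 0, _ => hF.leftLim_le le_rfl
    | 1, _ => hF.leftLim_le_rightLim le_rfl
  rintro ⟨x, k⟩ ⟨y, l⟩ h
  rcases Prod.Lex.le_iff.1 h with hlt | ⟨heq, hkl⟩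
  · exact (hright k x).trans ((hF.rightLim_le_leftLim hlt).trans (hleft l y))
  · obtain rfl : x = y := heq
    match k, l, hkl with
    | -1, l, _ => exact hleft l x
    | 0, 0, _ => exact le_rfl
    | k, 1, _ => exact hright k x

lemma strictMono_sideMap (hg : StrictMono g) : StrictMono (sideMap g) := fun a b hab => by
  rw [Prod.Lex.lt_iff] at hab ⊢
  exact hab.imp (fun h => hg h) fun h => ⟨congrArg g h.1, h.2⟩

lemma exists_le_sideFilter {u : Ultrafilter ℝ} {x : ℝ} (hu : ↑u ≤ 𝓝 x) :
    ∃ k, ↑u ≤ sideFilter k x := by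
  rw [← nhdsNE_sup_pure, ← nhdsLT_sup_nhdsGT, Ultrafilter.le_sup_iff, Ultrafilter.le_sup_iff] at hu
  rcases hu with (h | h) | h
  exacts [⟨.neg, h⟩, ⟨.pos, h⟩, ⟨.zero, h⟩]

lemma exists_sideLim_sub_eq (h₁ : Monotone H₁) (h₂ : Monotone H₂) {s : Set ℝ} (hs : IsCompact s)
    {c : ℝ} (hc : c ∈ closure ((H₁ - H₂) '' s)) : ∃ y, (sideLim H₁ - sideLim H₂) y = c := by
  obtain ⟨u, hus, huc⟩ := mem_closure_iff_ultrafilter.1 hc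
  obtain ⟨x, -, hx⟩ := hs.ultrafilter_le_nhds (.ofComapInfPrincipal hus)
    (le_principal_iff.2 (Ultrafilter.ofComapInfPrincipal_mem hus))
  obtain ⟨k, hk⟩ := exists_le_sideFilter hx
  refine ⟨toLex (x, k), tendsto_nhds_unique
    (((tendsto_sideLim h₁ k x).sub (tendsto_sideLim h₂ k x)).mono_left hk) ?_⟩
  exact (congrArg Ultrafilter.toFilter (Ultrafilter.ofComapInfPrincipal_eq_of_map hus)).trans_le huc

end SideLim

/-! ### A Liouville theorem for monotone harmonic functions -/

lemma markovOp_comp_neg {ι : Type*} [Fintype ι] (w : ι → ℝ) (g : ι → ℝ → ℝ) (f : ℝ → ℝ) :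
    markovOp w (fun i s => -g i (-s)) (f ∘ Neg.neg) = markovOp w g f ∘ Neg.neg :=
  markovOp_comp_of_semiconj (fun _ _ => neg_neg _) w f

namespace TwoSidedWalk

variable {ι : Type*} [Fintype ι] {w mp mm : ι → ℝ} {g : ι → ℝ → ℝ} {B K : ℝ} {H₁ H₂ : ℝ → ℝ}

lemma exists_forall_le_of_le_on_Icc (S : TwoSidedWalk w mp mm g B K)
    (hmp : ∑ i, w i * mp i ≤ 0) (hmm : ∑ i, w i * mm i ≤ 0) :
    ∃ R ≥ 0, ∀ (D : ℝ → ℝ) (M T : ℝ), (∀ s, D s ≤ M) → markovOp w g D = D →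
      (∀ s ∈ Icc (-R) R, D s ≤ T) → ∀ s, D s ≤ T := by
  obtain ⟨R₁, hright⟩ := S.right.exists_forall_le_of_le_on_window hmp
  obtain ⟨R₂, hleft⟩ := S.left.exists_forall_le_of_le_on_window hmm
  have hK := S.right.K_pos
  obtain ⟨R, hKR, hR₁, hR₂⟩ : ∃ R, K ≤ R ∧ R₁ ≤ R ∧ R₂ ≤ R :=
    ((eventually_ge_atTop K).and ((eventually_ge_atTop R₁).and (eventually_ge_atTop R₂))).exists
  refine ⟨R, hK.le.trans hKR, fun D M T hM hP hT s => ?_⟩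
  rcases le_total R s with hs | hs
  · exact hright R hR₁ D M T hM (fun t => (congr_fun hP t).ge)
      (fun t ht => hT t ⟨by linarith [ht.1], ht.2⟩) s hs
  rcases le_total s (-R) with hs' | hs'
  · have hneg := hleft R hR₂ (D ∘ Neg.neg) M T (fun t => hM _)
      (fun t => by rw [markovOp_comp_neg, hP])
      (fun t ht => hT _ ⟨neg_le_neg ht.2, by linarith [ht.1]⟩) (-s) (le_neg.2 hs')
    simpa only [comp_apply, neg_neg] using hneg
  · exact hT s ⟨hs', hs⟩

lemma eq_of_isMax_of_isMin_sideLim (S : TwoSidedWalk w mp mm g B K) (h₁ : Monotone H₁)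
    (h₂ : Monotone H₂) (hP₁ : markovOp w g H₁ = H₁) (hP₂ : markovOp w g H₂ = H₂)
    {s : Set ℝ} (hs : IsCompact s) {m M : ℝ} (hm : m ∈ closure ((H₁ - H₂) '' s))
    (hM : M ∈ closure ((H₁ - H₂) '' s)) (hbdd : ∀ s, m ≤ (H₁ - H₂) s ∧ (H₁ - H₂) s ≤ M) :
    M = m := by
  obtain ⟨p, rfl⟩ := exists_sideLim_sub_eq h₁ h₂ hs hM
  obtain ⟨q, rfl⟩ := exists_sideLim_sub_eq h₁ h₂ hs hm
  have hlim : ∀ y, Tendsto (H₁ - H₂) (sideFilter (ofLex y).2 (ofLex y).1)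
      (𝓝 ((sideLim H₁ - sideLim H₂) y)) := fun y =>
    (tendsto_sideLim h₁ _ _).sub (tendsto_sideLim h₂ _ _)
  exact S.eq_of_isMax_of_isMin Prod.Lex.monotone_fst (γ := fun i => sideMap (g i))
    (fun _ _ => rfl) (fun i => (strictMono_sideMap (S.right.strictMono i)).monotone)
    (monotone_sideLim h₁) (monotone_sideLim h₂)
    (markovOp_sideLim S.right.strictMono S.right.continuous h₁ hP₁)
    (markovOp_sideLim S.right.strictMono S.right.continuous h₂ hP₂)
    (fun y => le_of_tendsto' (hlim y) fun s => (hbdd s).2)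
    (fun y => ge_of_tendsto' (hlim y) fun s => (hbdd s).1)

lemma exists_sub_eq_const_of_drift_nonpos (S : TwoSidedWalk w mp mm g B K)
    (hmp : ∑ i, w i * mp i ≤ 0) (hmm : ∑ i, w i * mm i ≤ 0) (h₁ : Monotone H₁)
    (h₂ : Monotone H₂) (hP₁ : markovOp w g H₁ = H₁) (hP₂ : markovOp w g H₂ = H₂) {b : ℝ}
    (hb : ∀ s, |(H₁ - H₂) s| ≤ b) : ∃ c, ∀ s, (H₁ - H₂) s = c := by
  obtain ⟨R, hR, hmax⟩ := S.exists_forall_le_of_le_on_Icc hmp hmm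
  set D := H₁ - H₂ with hD
  have hPD : markovOp w g D = D := by rw [hD, map_sub, hP₁, hP₂]
  have hne : (D '' Icc (-R) R).Nonempty := ⟨_, 0, ⟨neg_nonpos.2 hR, hR⟩, rfl⟩
  have habove : BddAbove (D '' Icc (-R) R) :=
    ⟨b, forall_mem_image.2 fun s _ => (abs_le.1 (hb s)).2⟩
  have hbelow : BddBelow (D '' Icc (-R) R) :=
    ⟨-b, forall_mem_image.2 fun s _ => (abs_le.1 (hb s)).1⟩
  have hle : ∀ s, D s ≤ sSup (D '' Icc (-R) R) := hmax D b _ (fun s => (abs_le.1 (hb s)).2) hPD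
    fun s hs => le_csSup habove (mem_image_of_mem D hs)
  have hge : ∀ s, sInf (D '' Icc (-R) R) ≤ D s := fun s => neg_le_neg_iff.1 <|
    hmax (-D) b _ (fun s => neg_le.1 (abs_le.1 (hb s)).1) (by rw [map_neg, hPD])
      (fun s hs => neg_le_neg (csInf_le hbelow (mem_image_of_mem D hs))) s
  have heq := S.eq_of_isMax_of_isMin_sideLim h₁ h₂ hP₁ hP₂ isCompact_Icc
    (csInf_mem_closure hne hbelow) (csSup_mem_closure hne habove) fun s => ⟨hge s, hle s⟩
  exact ⟨_, fun s => le_antisymm (hle s) (heq.trans_le (hge s))⟩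

end TwoSidedWalk

section Linear

variable {ι X : Type*} [Fintype ι] {w : ι → ℝ} {g : ι → ℝ → ℝ} {F : ℝ → ℝ}

lemma markovOp_smul_sub_smul {γ : ι → X → X} {F₁ F₂ : X → ℝ} (hP₁ : markovOp w γ F₁ = F₁)
    (hP₂ : markovOp w γ F₂ = F₂) (α β : ℝ) :
    markovOp w γ (α • F₁ - β • F₂) = α • F₁ - β • F₂ := by
  rw [map_sub, map_smul, map_smul, hP₁, hP₂]

lemma monotone_neg_comp_neg (hF : Monotone F) : Monotone (-(F ∘ Neg.neg)) :=
  fun _ _ h => neg_le_neg (hF (neg_le_neg h))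

lemma markovOp_neg_comp_neg (hP : markovOp w g F = F) :
    markovOp w (fun i s => -g i (-s)) (-(F ∘ Neg.neg)) = -(F ∘ Neg.neg) := by
  rw [map_neg, markovOp_comp_neg, hP]

lemma exists_convex_mul_eq {a b : ℝ} (ha : 0 ≤ a) (hb : 0 ≤ b) :
    ∃ α ∈ Icc (0 : ℝ) 1, α * a = (1 - α) * b := by
  rcases (add_nonneg ha hb).eq_or_lt with h | h
  · exact ⟨0, ⟨le_rfl, zero_le_one⟩, by linarith⟩
  · refine ⟨b / (a + b), ⟨by positivity, (div_le_one h).2 (by linarith)⟩, ?_⟩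
    field_simp
    ring

end Linear

namespace EndWalk

variable {ι : Type*} [Fintype ι] {w m : ι → ℝ} {g : ι → ℝ → ℝ} {B K : ℝ} {D F F₁ F₂ : ℝ → ℝ}

lemma exists_tendsto_atTop (S : EndWalk w m g B K) (hF : Monotone F) (hP : markovOp w g F = F)
    (hm : 0 < ∑ i, w i * m i) : ∃ l, Tendsto F atTop (𝓝 l) := by
  obtain ⟨b, hb⟩ := S.exists_forall_le_of_drift_pos hF hP hm
  exact ⟨_, tendsto_atTop_ciSup hF ⟨b, forall_mem_range.2 hb⟩⟩

lemma le_of_tendsto_atTop_of_tendsto_atBot (S : EndWalk w m g B K) (hP : markovOp w g D = D)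
    {M d : ℝ} (hM : ∀ s, D s ≤ M) (htop : Tendsto D atTop (𝓝 d)) (hbot : Tendsto D atBot (𝓝 d))
    (s : ℝ) : D s ≤ d := by
  refine le_of_forall_gt_imp_ge_of_dense fun T hT => ?_
  obtain ⟨b, hb⟩ := eventually_atTop.1 (htop.eventually_le_const hT)
  obtain ⟨a, ha⟩ := eventually_atBot.1 (hbot.eventually_le_const hT)
  exact S.le_of_forall_exit_le (a := min s a) (b := max s b) (fun t _ => hM t)
    (fun t _ => (congr_fun hP t).ge) (fun t _ i hi => hb _ ((le_max_right _ _).trans hi.le))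
    (fun t _ i hi => ha _ (hi.le.trans (min_le_right _ _))) s ⟨min_le_left _ _, le_max_left _ _⟩

lemma smul_sub_smul_le_add (S : EndWalk w m g B K) (h₁ : Monotone F₁) (h₂ : Monotone F₂)
    (hP₁ : markovOp w g F₁ = F₁) (hP₂ : markovOp w g F₂ = F₂) {b : ℝ}
    (hb₁ : ∀ s, F₁ (s + K) - F₁ s ≤ b) (hb₂ : ∀ s, F₂ (s + K) - F₂ s ≤ b) {α β a c : ℝ}
    (hα : α ∈ Icc 0 1) (hβ : β ∈ Icc 0 1) (hac : (α • F₁ - β • F₂) c = (α • F₁ - β • F₂) a) :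
    ∀ s ∈ Icc a c, (α • F₁ - β • F₂) s ≤ (α • F₁ - β • F₂) a + b := by
  have hb : 0 ≤ b := (sub_nonneg.2 (h₁ (by linarith [S.K_pos]))).trans (hb₁ 0)
  have hαb : α * b ≤ b := mul_le_of_le_one_left hb hα.2
  have hβb : β * b ≤ b := mul_le_of_le_one_left hb hβ.2
  refine S.le_of_forall_exit_le (M := α * F₁ c - β * F₂ a)
    (fun s hs => sub_le_sub (mul_le_mul_of_nonneg_left (h₁ hs.2) hα.1)
      (mul_le_mul_of_nonneg_left (h₂ hs.1) hβ.1))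
    (fun s _ => (congr_fun (markovOp_smul_sub_smul hP₁ hP₂ α β) s).ge)
    (fun s hs i hi => ?_) (fun s hs i hi => ?_)
  · have hF₁ : F₁ (g i s) ≤ F₁ c + b := by
      linarith [h₁ ((S.le_add i s).trans (add_le_add_left hs.2 K)), hb₁ c]
    rw [← hac]
    simp only [Pi.sub_apply, Pi.smul_apply, smul_eq_mul]
    linarith [mul_le_mul_of_nonneg_left hF₁ hα.1, mul_le_mul_of_nonneg_left (h₂ hi.le) hβ.1]
  · have hF₂ : F₂ a - b ≤ F₂ (g i s) := by
      have hwin := hb₂ (a - K)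
      rw [sub_add_cancel] at hwin
      linarith [h₂ ((sub_le_sub_right hs.1 K).trans (S.sub_le i s))]
    simp only [Pi.sub_apply, Pi.smul_apply, smul_eq_mul]
    linarith [mul_le_mul_of_nonneg_left hF₂ hβ.1, mul_le_mul_of_nonneg_left (h₁ hi.le) hα.1]

lemma exists_abs_smul_sub_smul_sub_le (S : EndWalk w m g B K) (h₁ : Monotone F₁)
    (h₂ : Monotone F₂) (hP₁ : markovOp w g F₁ = F₁) (hP₂ : markovOp w g F₂ = F₂) {b : ℝ}
    (hb₁ : ∀ s, F₁ (s + K) - F₁ s ≤ b) (hb₂ : ∀ s, F₂ (s + K) - F₂ s ≤ b) {n : ℝ} (hn : 0 ≤ n) :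
    ∃ α ∈ Icc (0 : ℝ) 1, ∀ s ∈ Icc (-n) n,
      |(α • F₁ - (1 - α) • F₂) s - (α • F₁ - (1 - α) • F₂) 0| ≤ 2 * b := by
  have hnn : -n ≤ n := by linarith
  obtain ⟨α, hα, heq⟩ := exists_convex_mul_eq (sub_nonneg.2 (h₁ hnn)) (sub_nonneg.2 (h₂ hnn))
  have hα' : 1 - α ∈ Icc (0 : ℝ) 1 := ⟨by linarith [hα.2], by linarith [hα.1]⟩
  have hle := S.smul_sub_smul_le_add h₁ h₂ hP₁ hP₂ hb₁ hb₂ hα hα' (a := -n) (c := n)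
    (by simp only [Pi.sub_apply, Pi.smul_apply, smul_eq_mul]; linarith)
  have hge := S.smul_sub_smul_le_add h₂ h₁ hP₂ hP₁ hb₂ hb₁ hα' hα (a := -n) (c := n)
    (by simp only [Pi.sub_apply, Pi.smul_apply, smul_eq_mul]; linarith)
  have h0 : (0 : ℝ) ∈ Icc (-n) n := ⟨by linarith, hn⟩
  refine ⟨α, hα, fun s hs => ?_⟩
  have hle0 := hle 0 h0
  have hge0 := hge 0 h0
  have hles := hle s hs
  have hges := hge s hs
  simp only [Pi.sub_apply] at hle0 hge0 hles hges ⊢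
  exact abs_le.2 ⟨by linarith, by linarith⟩

end EndWalk

namespace TwoSidedWalk

variable {ι : Type*} [Fintype ι] {w mp mm : ι → ℝ} {g : ι → ℝ → ℝ} {B K : ℝ}
  {D F F₁ F₂ : ℝ → ℝ}

lemma exists_tendsto_atBot (S : TwoSidedWalk w mp mm g B K) (hF : Monotone F)
    (hP : markovOp w g F = F) (hmm : 0 < ∑ i, w i * mm i) : ∃ l, Tendsto F atBot (𝓝 l) := by
  obtain ⟨l, hl⟩ := S.left.exists_tendsto_atTop (monotone_neg_comp_neg hF)
    (markovOp_neg_comp_neg hP) hmm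
  refine ⟨-l, ?_⟩
  simpa only [comp_def, Pi.neg_apply, neg_neg] using (hl.comp tendsto_neg_atBot_atTop).neg

lemma exists_add_sub_le (S : TwoSidedWalk w mp mm g B K) (hF : Monotone F)
    (hP : markovOp w g F = F) : ∃ b, ∀ s, F (s + K) - F s ≤ b := by
  obtain ⟨b₁, hright⟩ := S.right.exists_add_sub_le hF hP
  obtain ⟨b₂, hleft⟩ := S.left.exists_add_sub_le (monotone_neg_comp_neg hF)
    (markovOp_neg_comp_neg hP)
  refine ⟨max (max b₁ b₂) (F K - F (-K)), fun s => ?_⟩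
  rcases le_total 0 s with hs | hs
  · exact (hright s hs).trans ((le_max_left _ _).trans (le_max_left _ _))
  rcases le_total s (-K) with hsK | hsK
  · have hneg := hleft (-s - K) (by linarith)
    simp only [Pi.neg_apply, comp_apply, neg_sub, sub_add_cancel, neg_neg, sub_neg_eq_add] at hneg
    refine le_trans ?_ ((le_max_right _ _).trans (le_max_left _ _))
    rw [add_comm s K]
    linarith
  · exact (sub_le_sub (hF (by linarith)) (hF hsK)).trans (le_max_right _ _)

lemma le_of_tendsto_atTop_of_drift_nonpos (S : TwoSidedWalk w mp mm g B K)
    (hmm : ∑ i, w i * mm i ≤ 0) (hP : markovOp w g D = D) {M d : ℝ} (hM : ∀ s, D s ≤ M)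
    (htop : Tendsto D atTop (𝓝 d)) (s : ℝ) : D s ≤ d := by
  refine le_of_forall_gt_imp_ge_of_dense fun T hT => ?_
  obtain ⟨b, hb⟩ := eventually_atTop.1 (htop.eventually_le_const hT)
  obtain ⟨R₀, hleft⟩ := S.left.exists_forall_le_of_le_on_window hmm
  obtain ⟨R, hR₀, hsR⟩ : ∃ R, R₀ ≤ R ∧ -s ≤ R :=
    ⟨max R₀ (-s), le_max_left _ _, le_max_right _ _⟩
  obtain ⟨c, hsc, hbc, hRc⟩ : ∃ c, s ≤ c ∧ b ≤ c ∧ -R + K ≤ c :=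
    ((eventually_ge_atTop s).and ((eventually_ge_atTop b).and (eventually_ge_atTop _))).exists
  refine S.right.le_of_exit_le (a := -R) (b := c) (fun t _ => hM t)
    (fun t _ => (congr_fun hP t).ge) (fun t _ i hi => hb _ (hbc.trans hi.le))
    (fun T' _ hT' t _ i hi => ?_) s ⟨neg_le.1 hsR, hsc⟩
  have hneg := hleft R hR₀ (D ∘ Neg.neg) M T' (fun t => hM _)
    (fun t => by rw [markovOp_comp_neg, hP])
    (fun t ht => hT' _ ⟨neg_le_neg ht.2, by linarith [ht.1]⟩) (-g i t) (le_neg.2 hi.le)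
  simpa only [comp_apply, neg_neg] using hneg

-- On `[-n, n]` choose the coefficients so that the combination takes the same value at both ends,
-- then let `n` tend to infinity along a subsequence.
lemma exists_abs_smul_sub_smul_le (S : TwoSidedWalk w mp mm g B K) (h₁ : Monotone F₁)
    (h₂ : Monotone F₂) (hP₁ : markovOp w g F₁ = F₁) (hP₂ : markovOp w g F₂ = F₂) :
    ∃ α ∈ Icc (0 : ℝ) 1, ∃ b, ∀ s, |(α • F₁ - (1 - α) • F₂) s| ≤ b := by
  obtain ⟨b₁, hb₁⟩ := S.exists_add_sub_le h₁ hP₁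
  obtain ⟨b₂, hb₂⟩ := S.exists_add_sub_le h₂ hP₂
  choose α hα hbound using fun n : ℕ => S.right.exists_abs_smul_sub_smul_sub_le h₁ h₂ hP₁ hP₂
    (fun s => (hb₁ s).trans (le_max_left b₁ b₂)) (fun s => (hb₂ s).trans (le_max_right b₁ b₂))
    n.cast_nonneg
  obtain ⟨a, ha, φ, hφ, hlim⟩ := isCompact_Icc.tendsto_subseq hα
  refine ⟨a, ha, 2 * max b₁ b₂ + |(a • F₁ - (1 - a) • F₂) 0|, fun s => ?_⟩
  have hval : ∀ s, Tendsto (fun k => (α (φ k) • F₁ - (1 - α (φ k)) • F₂) s) atTop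
      (𝓝 ((a • F₁ - (1 - a) • F₂) s)) := fun s =>
    (hlim.mul_const _).sub ((hlim.const_sub 1).mul_const _)
  obtain ⟨N, hN⟩ := exists_nat_ge |s|
  have hle := le_of_tendsto ((hval s).sub (hval 0)).abs <|
    (eventually_ge_atTop N).mono fun k hk => hbound (φ k) s <| abs_le.1 <|
      hN.trans (by exact_mod_cast hk.trans (hφ.id_le k))
  linarith [abs_sub_abs_le_abs_sub ((a • F₁ - (1 - a) • F₂) s) ((a • F₁ - (1 - a) • F₂) 0)]

lemma exists_smul_sub_smul_eq_of_drift_pos_of_drift_nonpos (S : TwoSidedWalk w mp mm g B K)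
    (hmp : 0 < ∑ i, w i * mp i) (hmm : ∑ i, w i * mm i ≤ 0) (h₁ : Monotone F₁)
    (h₂ : Monotone F₂) (hP₁ : markovOp w g F₁ = F₁) (hP₂ : markovOp w g F₂ = F₂) :
    ∃ α ∈ Icc (0 : ℝ) 1, ∃ c, ∀ s, (α • F₁ - (1 - α) • F₂) s = c := by
  obtain ⟨α, hα, b, hb⟩ := S.exists_abs_smul_sub_smul_le h₁ h₂ hP₁ hP₂
  obtain ⟨l₁, hl₁⟩ := S.right.exists_tendsto_atTop h₁ hP₁ hmp
  obtain ⟨l₂, hl₂⟩ := S.right.exists_tendsto_atTop h₂ hP₂ hmp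
  have hP := markovOp_smul_sub_smul hP₁ hP₂ α (1 - α)
  have hlim : Tendsto (α • F₁ - (1 - α) • F₂) atTop (𝓝 (α * l₁ - (1 - α) * l₂)) :=
    (hl₁.const_mul α).sub (hl₂.const_mul (1 - α))
  exact ⟨α, hα, _, fun s => le_antisymm
    (S.le_of_tendsto_atTop_of_drift_nonpos hmm hP (fun t => (abs_le.1 (hb t)).2) hlim s)
    (neg_le_neg_iff.1 (S.le_of_tendsto_atTop_of_drift_nonpos (D := -(α • F₁ - (1 - α) • F₂)) hmm
      (by rw [map_neg, hP]) (fun t => neg_le.1 (abs_le.1 (hb t)).1) hlim.neg s))⟩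

lemma exists_smul_sub_smul_eq_of_drift_pos (S : TwoSidedWalk w mp mm g B K)
    (hmp : 0 < ∑ i, w i * mp i) (hmm : 0 < ∑ i, w i * mm i) (h₁ : Monotone F₁)
    (h₂ : Monotone F₂) (hP₁ : markovOp w g F₁ = F₁) (hP₂ : markovOp w g F₂ = F₂) :
    ∃ α ∈ Icc (0 : ℝ) 1, ∃ c, ∀ s, (α • F₁ - (1 - α) • F₂) s = c := by
  obtain ⟨l₁, hl₁⟩ := S.right.exists_tendsto_atTop h₁ hP₁ hmp
  obtain ⟨l₂, hl₂⟩ := S.right.exists_tendsto_atTop h₂ hP₂ hmp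
  obtain ⟨k₁, hk₁⟩ := S.exists_tendsto_atBot h₁ hP₁ hmm
  obtain ⟨k₂, hk₂⟩ := S.exists_tendsto_atBot h₂ hP₂ hmm
  obtain ⟨α, hα, heq⟩ := exists_convex_mul_eq
    (sub_nonneg.2 ((h₁.le_of_tendsto hk₁ 0).trans (h₁.ge_of_tendsto hl₁ 0)))
    (sub_nonneg.2 ((h₂.le_of_tendsto hk₂ 0).trans (h₂.ge_of_tendsto hl₂ 0)))
  have hP := markovOp_smul_sub_smul hP₁ hP₂ α (1 - α)
  have htop : Tendsto (α • F₁ - (1 - α) • F₂) atTop (𝓝 (α * l₁ - (1 - α) * l₂)) :=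
    (hl₁.const_mul α).sub (hl₂.const_mul (1 - α))
  have hbot : Tendsto (α • F₁ - (1 - α) • F₂) atBot (𝓝 (α * l₁ - (1 - α) * l₂)) := by
    rw [show α * l₁ - (1 - α) * l₂ = α * k₁ - (1 - α) * k₂ by linarith]
    exact (hk₁.const_mul α).sub (hk₂.const_mul (1 - α))
  have hle : ∀ s, (α • F₁ - (1 - α) • F₂) s ≤ α * l₁ - (1 - α) * k₂ := fun s =>
    sub_le_sub (mul_le_mul_of_nonneg_left (h₁.ge_of_tendsto hl₁ s) hα.1)
      (mul_le_mul_of_nonneg_left (h₂.le_of_tendsto hk₂ s) (sub_nonneg.2 hα.2))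
  have hge : ∀ s, α * k₁ - (1 - α) * l₂ ≤ (α • F₁ - (1 - α) • F₂) s := fun s =>
    sub_le_sub (mul_le_mul_of_nonneg_left (h₁.le_of_tendsto hk₁ s) hα.1)
      (mul_le_mul_of_nonneg_left (h₂.ge_of_tendsto hl₂ s) (sub_nonneg.2 hα.2))
  exact ⟨α, hα, _, fun s => le_antisymm
    (S.right.le_of_tendsto_atTop_of_tendsto_atBot hP hle htop hbot s)
    (neg_le_neg_iff.1 (S.right.le_of_tendsto_atTop_of_tendsto_atBot
      (D := -(α • F₁ - (1 - α) • F₂)) (by rw [map_neg, hP])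
      (fun t => neg_le_neg (hge t)) htop.neg hbot.neg s))⟩

theorem exists_smul_sub_smul_eq_const (S : TwoSidedWalk w mp mm g B K) (h₁ : Monotone F₁)
    (h₂ : Monotone F₂) (hP₁ : markovOp w g F₁ = F₁) (hP₂ : markovOp w g F₂ = F₂) :
    ∃ α ∈ Icc (0 : ℝ) 1, ∃ c, ∀ s, (α • F₁ - (1 - α) • F₂) s = c := by
  rcases S.right.drift_nonneg.eq_or_lt with hmp | hmp <;>
    rcases S.left.drift_nonneg.eq_or_lt with hmm | hmm
  · obtain ⟨α, hα, b, hb⟩ := S.exists_abs_smul_sub_smul_le h₁ h₂ hP₁ hP₂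
    exact ⟨α, hα, S.exists_sub_eq_const_of_drift_nonpos hmp.ge hmm.ge (h₁.const_mul hα.1)
      (h₂.const_mul (sub_nonneg.2 hα.2)) ((map_smul _ _ _).trans (congrArg _ hP₁))
      ((map_smul _ _ _).trans (congrArg _ hP₂)) hb⟩
  · obtain ⟨α, hα, c, hc⟩ := S.neg.exists_smul_sub_smul_eq_of_drift_pos_of_drift_nonpos hmm hmp.ge
      (monotone_neg_comp_neg h₁) (monotone_neg_comp_neg h₂) (markovOp_neg_comp_neg hP₁)
      (markovOp_neg_comp_neg hP₂)
    refine ⟨α, hα, -c, fun s => ?_⟩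
    have hneg := hc (-s)
    simp only [Pi.sub_apply, Pi.smul_apply, Pi.neg_apply, comp_apply, neg_neg, smul_eq_mul]
      at hneg ⊢
    linarith
  · exact S.exists_smul_sub_smul_eq_of_drift_pos_of_drift_nonpos hmp hmm.ge h₁ h₂ hP₁ hP₂
  · exact S.exists_smul_sub_smul_eq_of_drift_pos hmp hmm h₁ h₂ hP₁ hP₂

end TwoSidedWalk

/-! ### Uniqueness of stationary measures on the line -/

section Stationary

variable {ι X : Type*} [Fintype ι] [TopologicalSpace X] [MeasurableSpace X] {w : ι → ℝ}

/-- `ν` is a stationary, possibly infinite, measure of the random walk which moves `x` to `γ i x`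
with probability `w i`. -/
def IsStationary (w : ι → ℝ) (γ : ι → X → X) (ν : Measure X) : Prop :=
  ∀ f : X → ℝ, Continuous f → HasCompactSupport f →
    ∫ x, f x ∂ν = ∑ i, w i * ∫ x, f (γ i x) ∂ν

lemma IsStationary.eq_sum_smul_map [T2Space X] [LocallyCompactSpace X] [SigmaCompactSpace X]
    [TopologicalSpace.PseudoMetrizableSpace X] [BorelSpace X] {e : ι → X ≃ₜ X} {ν : Measure X}
    [ν.Regular] (hν : IsStationary w (fun i => e i) ν) (hw : ∀ i, 0 ≤ w i) :
    ν = ∑ i, (w i).toNNReal • ν.map (e i) := by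
  have hreg : ∀ i, (ν.map (e i)).Regular := fun i => .map (e i)
  have hfin : IsFiniteMeasureOnCompacts (∑ i, (w i).toNNReal • ν.map (e i)) := ⟨fun s hs => by
    rw [Measure.finsetSum_apply]
    exact ENNReal.sum_lt_top.2 fun i _ => hs.measure_lt_top⟩
  have hlf := isLocallyFiniteMeasure_of_isFiniteMeasureOnCompacts
    (μ := ∑ i, (w i).toNNReal • ν.map (e i))
  refine Measure.ext_of_integral_eq_on_compactlySupported fun f => ?_
  rw [hν f f.continuous f.hasCompactSupport, integral_finsetSum_measure
    (f := fun x => f x) fun i _ => f.continuous.integrable_of_hasCompactSupport f.hasCompactSupport]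
  refine Finset.sum_congr rfl fun i _ => ?_
  rw [integral_smul_nnreal_measure, (e i).measurableEmbedding.integral_map, NNReal.smul_def,
    Real.coe_toNNReal _ (hw i), smul_eq_mul]

end Stationary

lemma exists_monotone_sub_eq_measureReal_Ioc (ν : Measure ℝ) [IsLocallyFiniteMeasure ν] :
    ∃ F : ℝ → ℝ, Monotone F ∧ ∀ x y, x ≤ y → F y - F x = ν.real (Ioc x y) := by
  have hsub : ∀ x y, x ≤ y → (∫ _ in (0 : ℝ)..y, (1 : ℝ) ∂ν) - (∫ _ in (0 : ℝ)..x, (1 : ℝ) ∂ν) =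
      ν.real (Ioc x y) := fun x y hxy => by
    rw [intervalIntegral.integral_interval_sub_left intervalIntegrable_const
      intervalIntegrable_const, intervalIntegral.integral_of_le hxy, setIntegral_const,
      smul_eq_mul, mul_one]
  exact ⟨_, fun x y hxy => sub_nonneg.1 (measureReal_nonneg.trans_eq (hsub x y hxy).symm), hsub⟩

lemma smul_eq_smul_of_mul_measureReal_Ioc {ν₁ ν₂ : Measure ℝ} [IsLocallyFiniteMeasure ν₁]
    [IsLocallyFiniteMeasure ν₂] {α β : ℝ≥0}
    (h : ∀ x y, x ≤ y → α * ν₁.real (Ioc x y) = β * ν₂.real (Ioc x y)) : α • ν₁ = β • ν₂ := by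
  refine Measure.ext_of_Ioc _ _ fun x y hxy => ?_
  rw [← measureReal_eq_measureReal_iff measure_Ioc_lt_top.ne measure_Ioc_lt_top.ne,
    measureReal_nnreal_smul_apply, measureReal_nnreal_smul_apply]
  exact h x y hxy.le

section Line

variable {ι : Type*} [Fintype ι] {w mp mm : ι → ℝ} {e : ι → ℝ ≃o ℝ} {B K : ℝ}
  {ν ν₁ ν₂ : Measure ℝ} [IsLocallyFiniteMeasure ν] [IsLocallyFiniteMeasure ν₁]
  [IsLocallyFiniteMeasure ν₂]

lemma IsStationary.measureReal_Ioc (hν : IsStationary w (fun i => e i) ν) (hw : ∀ i, 0 ≤ w i)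
    (x y : ℝ) : ν.real (Ioc x y) = ∑ i, w i * ν.real (Ioc ((e i).symm x) ((e i).symm y)) := by
  have hsum := hν.eq_sum_smul_map (e := fun i => (e i).toHomeomorph) hw
  have happly : ν (Ioc x y) =
      ∑ i, (w i).toNNReal * ν (Ioc ((e i).symm x) ((e i).symm y)) := by
    conv_lhs => rw [hsum, Measure.finsetSum_apply]
    refine Finset.sum_congr rfl fun i _ => ?_
    rw [Measure.smul_apply, (e i).toHomeomorph.measurableEmbedding.map_apply,
      OrderIso.coe_toHomeomorph, OrderIso.preimage_Ioc, ENNReal.smul_def, smul_eq_mul]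
  rw [measureReal_def, happly, ENNReal.toReal_sum fun i _ =>
    ENNReal.mul_ne_top ENNReal.coe_ne_top measure_Ioc_lt_top.ne]
  refine Finset.sum_congr rfl fun i _ => ?_
  rw [ENNReal.toReal_mul, ENNReal.coe_toReal, Real.coe_toNNReal _ (hw i), measureReal_def]

namespace TwoSidedWalk

-- Stationarity makes `F - P F` constant, and a monotone `F` leaves no room for a nonzero constant.
lemma exists_monotone_harmonic (S : TwoSidedWalk w mp mm (fun i => (e i).symm) B K)
    (hν : IsStationary w (fun i => e i) ν) :
    ∃ F : ℝ → ℝ, Monotone F ∧ markovOp w (fun i => (e i).symm) F = F ∧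
      ∀ x y, x ≤ y → F y - F x = ν.real (Ioc x y) := by
  obtain ⟨F, hF, hFν⟩ := exists_monotone_sub_eq_measureReal_Ioc ν
  have hdefect : ∀ x y, x < y → F x - markovOp w (fun i => (e i).symm) F x =
      F y - markovOp w (fun i => (e i).symm) F y := fun x y hxy => by
    have hsub : markovOp w (fun i => (e i).symm) F y - markovOp w (fun i => (e i).symm) F x =
        F y - F x := by
      rw [hFν x y hxy.le, hν.measureReal_Ioc fun i => (S.right.isProbWeight.pos i).le]
      simp only [markovOp_apply, ← Finset.sum_sub_distrib, ← mul_sub,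
        hFν _ _ ((e _).symm.monotone hxy.le)]
    linarith
  have hharm := S.eqOn_markovOp_of_monotone_defect (π := id) (E := univ) (fun _ => Semiconj.id_left)
    (fun i => mapsTo_univ _ _) (fun x _ y _ hxy => hF hxy.le)
    (fun x _ y _ hxy => (hdefect x y hxy).le)
  exact ⟨F, hF, (eqOn_univ _ _).1 hharm, hFν⟩

theorem exists_eq_smul_of_isStationary (S : TwoSidedWalk w mp mm (fun i => (e i).symm) B K)
    (hν₁ : IsStationary w (fun i => e i) ν₁) (hν₂ : IsStationary w (fun i => e i) ν₂)
    (h₁ : ν₁ ≠ 0) (h₂ : ν₂ ≠ 0) : ∃ C : ℝ≥0, 0 < C ∧ ν₁ = C • ν₂ := by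
  obtain ⟨F₁, hF₁, hP₁, hFν₁⟩ := S.exists_monotone_harmonic hν₁
  obtain ⟨F₂, hF₂, hP₂, hFν₂⟩ := S.exists_monotone_harmonic hν₂
  obtain ⟨α, ⟨hα₀, hα₁⟩, c, hc⟩ := S.exists_smul_sub_smul_eq_const hF₁ hF₂ hP₁ hP₂
  lift α to ℝ≥0 using hα₀
  have hsmul : α • ν₁ = (1 - α) • ν₂ := smul_eq_smul_of_mul_measureReal_Ioc fun x y hxy => by
    rw [NNReal.coe_sub hα₁, NNReal.coe_one, ← hFν₁ x y hxy, ← hFν₂ x y hxy]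
    have hxy := (hc x).trans (hc y).symm
    simp only [Pi.sub_apply, Pi.smul_apply, smul_eq_mul] at hxy
    linarith
  have hα : α ≠ 0 := fun h => h₂ (by simpa [h, eq_comm] using hsmul)
  have hα' : α < 1 := lt_of_le_of_ne hα₁ fun h => h₁ (by simpa [h] using hsmul)
  refine ⟨α⁻¹ * (1 - α), mul_pos (inv_pos.2 hα.bot_lt) (tsub_pos_of_lt hα'), ?_⟩
  rw [mul_smul, ← hsmul, inv_smul_smul₀ hα]

end TwoSidedWalk

end Line

/-! ### Existence of stationary measures -/

section Green

variable {ι X : Type*} [Fintype ι] {w : ι → ℝ} {γ : ι → X → X} {f f' φ V : X → ℝ} {x₀ : X}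
  {N : ℕ} {B c : ℝ}

lemma IsProbWeight.monotone_markovOp_pow (hw : IsProbWeight w) (n : ℕ) :
    Monotone ⇑(markovOp w γ ^ n) := by
  rw [Module.End.coe_pow]
  have hmono : Monotone ⇑(markovOp w γ) := fun f f' (h : f ≤ f') x =>
    hw.markovOp_le_markovOp fun i => h (γ i x)
  exact hmono.iterate n

lemma IsProbWeight.markovOp_pow_const (hw : IsProbWeight w) (n : ℕ) (c : ℝ) :
    (markovOp w γ ^ n) (fun _ => c) = fun _ => c := by
  rw [Module.End.coe_pow]
  exact iterate_fixed (hw.markovOp_const c) n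

lemma IsProbWeight.abs_markovOp_pow_le (hw : IsProbWeight w) (hf : ∀ x, |f x| ≤ c) (n : ℕ)
    (x : X) : |(markovOp w γ ^ n) f x| ≤ c := by
  have hconst := fun a => congrFun (hw.markovOp_pow_const (γ := γ) n a) x
  refine abs_le.2 ⟨(hconst (-c)).ge.trans ?_, le_trans ?_ (hconst c).le⟩
  · exact hw.monotone_markovOp_pow n (fun y => (abs_le.1 (hf y)).1) x
  · exact hw.monotone_markovOp_pow n (fun y => (abs_le.1 (hf y)).2) x

/-- The partial Green sum: the expected sum of `f` over the first `N` positions of the random walk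
started at `x₀`. -/
noncomputable def greenSum (w : ι → ℝ) (γ : ι → X → X) (x₀ : X) (N : ℕ) : (X → ℝ) →ₗ[ℝ] ℝ :=
  LinearMap.proj x₀ ∘ₗ ∑ n ∈ Finset.range N, markovOp w γ ^ n

lemma greenSum_apply (w : ι → ℝ) (γ : ι → X → X) (x₀ : X) (N : ℕ) (f : X → ℝ) :
    greenSum w γ x₀ N f = ∑ n ∈ Finset.range N, (markovOp w γ ^ n) f x₀ := by
  simp [greenSum]

lemma greenSum_markovOp (w : ι → ℝ) (γ : ι → X → X) (x₀ : X) (N : ℕ) (f : X → ℝ) :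
    greenSum w γ x₀ N (markovOp w γ f) =
      greenSum w γ x₀ N f + ((markovOp w γ ^ N) f x₀ - f x₀) := by
  have htel := Finset.sum_range_sub (fun n => (markovOp w γ ^ n) f x₀) N
  simp only [pow_succ, Module.End.mul_apply, pow_zero, Module.End.one_apply,
    Finset.sum_sub_distrib] at htel
  rw [greenSum_apply, greenSum_apply]
  linarith

namespace IsProbWeight

lemma monotone_greenSum (hw : IsProbWeight w) : Monotone (greenSum w γ x₀ N) := fun f f' h => by
  rw [greenSum_apply, greenSum_apply]
  exact Finset.sum_le_sum fun n _ => hw.monotone_markovOp_pow n h x₀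

lemma greenSum_nonneg (hw : IsProbWeight w) (hf : 0 ≤ f) : 0 ≤ greenSum w γ x₀ N f :=
  (map_zero _).symm.trans_le (hw.monotone_greenSum hf)

lemma monotone_greenSum_apply (hw : IsProbWeight w) (hf : 0 ≤ f) :
    Monotone fun N => greenSum w γ x₀ N f := by
  refine monotone_nat_of_le_succ fun N => ?_
  rw [greenSum_apply, greenSum_apply, Finset.sum_range_succ]
  have hN := hw.monotone_markovOp_pow N (γ := γ) hf x₀
  rw [map_zero] at hN
  exact le_add_of_nonneg_right hN

lemma abs_greenSum_le (hw : IsProbWeight w) : |greenSum w γ x₀ N f| ≤ greenSum w γ x₀ N |f| :=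
  abs_le'.2 ⟨hw.monotone_greenSum (le_abs_self f),
    (map_neg (greenSum w γ x₀ N) f).symm.trans_le (hw.monotone_greenSum (neg_le_abs f))⟩

lemma greenSum_const (hw : IsProbWeight w) (c : ℝ) : greenSum w γ x₀ N (fun _ => c) = N * c := by
  simp [greenSum_apply, hw.markovOp_pow_const]

end IsProbWeight

/-- The partial Green sums of `f` are controlled by those of `φ`. -/
def GreenDominated (w : ι → ℝ) (γ : ι → X → X) (φ f : X → ℝ) : Prop :=
  ∃ C ≥ 0, ∀ x₀ N, greenSum w γ x₀ N f ≤ C * (greenSum w γ x₀ N φ + 1)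

namespace GreenDominated

lemma refl (w : ι → ℝ) (γ : ι → X → X) (φ : X → ℝ) : GreenDominated w γ φ φ :=
  ⟨1, zero_le_one, fun _ _ => by linarith⟩

lemma mono (hf : GreenDominated w γ φ f) (hw : IsProbWeight w) (h : f' ≤ f) :
    GreenDominated w γ φ f' :=
  let ⟨C, hC, hfC⟩ := hf
  ⟨C, hC, fun x₀ N => (hw.monotone_greenSum h).trans (hfC x₀ N)⟩

lemma add (hf : GreenDominated w γ φ f) (hf' : GreenDominated w γ φ f') :
    GreenDominated w γ φ (f + f') := by
  obtain ⟨C, hC, hfC⟩ := hf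
  obtain ⟨C', hC', hfC'⟩ := hf'
  refine ⟨C + C', add_nonneg hC hC', fun x₀ N => ?_⟩
  rw [map_add, add_mul]
  exact add_le_add (hfC x₀ N) (hfC' x₀ N)

lemma smul (hf : GreenDominated w γ φ f) (hc : 0 ≤ c) : GreenDominated w γ φ (c • f) := by
  obtain ⟨C, hC, hfC⟩ := hf
  refine ⟨c * C, mul_nonneg hc hC, fun x₀ N => ?_⟩
  rw [map_smul, smul_eq_mul, mul_assoc]
  exact mul_le_mul_of_nonneg_left (hfC x₀ N) hc

lemma map_markovOp (hf : GreenDominated w γ φ f) (hw : IsProbWeight w) (hφ : 0 ≤ φ)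
    (hfc : ∀ x, |f x| ≤ c) : GreenDominated w γ φ (markovOp w γ f) := by
  obtain ⟨C, hC, hfC⟩ := hf
  refine ⟨C + 2 * |c|, by positivity, fun x₀ N => ?_⟩
  have hN := abs_le.1 (hw.abs_markovOp_pow_le (γ := γ) hfc N x₀)
  have h₀ := abs_le.1 (hfc x₀)
  have hφN : 0 ≤ greenSum w γ x₀ N φ := hw.greenSum_nonneg hφ
  calc greenSum w γ x₀ N (markovOp w γ f)
      = greenSum w γ x₀ N f + ((markovOp w γ ^ N) f x₀ - f x₀) :=
        greenSum_markovOp ..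
    _ ≤ C * (greenSum w γ x₀ N φ + 1) + 2 * |c| * 1 := by
        linarith [hfC x₀ N, hN.2, h₀.1, le_abs_self c]
    _ ≤ C * (greenSum w γ x₀ N φ + 1) + 2 * |c| * (greenSum w γ x₀ N φ + 1) := by
        gcongr
        linarith
    _ = _ := by ring

lemma exists_eventually_abs_le (hf : GreenDominated w γ φ |f|) (hw : IsProbWeight w)
    (hφ : Tendsto (fun N => greenSum w γ x₀ N φ) atTop atTop) :
    ∃ D, ∀ᶠ N in atTop, |((greenSum w γ x₀ N φ)⁻¹ • greenSum w γ x₀ N) f| ≤ D := by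
  obtain ⟨C, hC, hfC⟩ := hf
  refine ⟨C * 2, (hφ.eventually_ge_atTop 1).mono fun N hN => ?_⟩
  have hpos : 0 < greenSum w γ x₀ N φ := one_pos.trans_le hN
  rw [LinearMap.smul_apply, smul_eq_mul, abs_mul, abs_inv, abs_of_pos hpos, inv_mul_le_iff₀ hpos]
  calc |greenSum w γ x₀ N f| ≤ C * (greenSum w γ x₀ N φ + 1) := hw.abs_greenSum_le.trans (hfC x₀ N)
    _ ≤ C * (greenSum w γ x₀ N φ * 2) := by gcongr; linarith
    _ = greenSum w γ x₀ N φ * (C * 2) := by ring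

end GreenDominated

lemma IsProbWeight.mul_le_markovOp (hw : IsProbWeight w) (hf : 0 ≤ f) (i : ι) (x : X) :
    w i * f (γ i x) ≤ markovOp w γ f x :=
  Finset.single_le_sum (f := fun i => w i * f (γ i x))
    (fun i _ => mul_nonneg (hw.pos i).le (hf (γ i x))) (Finset.mem_univ i)

lemma IsProbWeight.greenDominated_indicator (hw : IsProbWeight w) (hφ : 0 ≤ φ) {ρ : X → ℝ}
    {R κ : ℝ} (hκ : 0 < κ) (hφR : ∀ x, ρ x ≤ R → 1 ≤ φ x) {i : ι}
    (hi : ∀ x, R < ρ x → ρ (γ i x) ≤ ρ x - κ) (r : ℝ) :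
    GreenDominated w γ φ ({x | ρ x ≤ r}.indicator 1) := by
  have hstep : ∀ n : ℕ, GreenDominated w γ φ ({x | ρ x ≤ R + n * κ}.indicator 1) := fun n => by
    induction n with
    | zero =>
      exact (GreenDominated.refl w γ φ).mono hw <|
        indicator_le' (fun x hx => hφR x (by simpa using hx)) fun x _ => hφ x
    | succ n ih =>
      have hind : 0 ≤ ({x | ρ x ≤ R + n * κ}.indicator 1 : X → ℝ) :=
        indicator_nonneg fun _ _ => zero_le_one
      have hind' : ∀ x, |({x | ρ x ≤ R + n * κ}.indicator 1 : X → ℝ) x| ≤ 1 := fun x => by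
        rw [abs_of_nonneg (hind x)]
        exact indicator_le_self' (fun _ _ => zero_le_one) x
      have hP : 0 ≤ (w i)⁻¹ • markovOp w γ ({x | ρ x ≤ R + n * κ}.indicator 1) := fun x =>
        mul_nonneg (inv_nonneg.2 (hw.pos i).le) (hw.le_markovOp fun j => hind (γ j x))
      refine ((GreenDominated.refl w γ φ).add ((ih.map_markovOp hw hφ hind').smul
        (inv_nonneg.2 (hw.pos i).le))).mono hw (indicator_le' (fun x hx => ?_) fun x _ =>
          add_nonneg (hφ x) (hP x))
      rcases le_or_gt (ρ x) R with hx' | hx'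
      · exact (hφR x hx').trans (le_add_of_nonneg_right (hP x))
      · have hmem : γ i x ∈ {x | ρ x ≤ R + n * κ} := by
          simp only [mem_ofPred_eq, Nat.cast_succ] at hx ⊢
          linarith [hi x hx']
        have hle := hw.mul_le_markovOp hind i x (γ := γ)
        rw [indicator_of_mem hmem, Pi.one_apply, mul_one] at hle
        refine le_trans ?_ (le_add_of_nonneg_left (hφ x))
        exact (inv_mul_cancel₀ (hw.pos i).ne').symm.trans_le
          (mul_le_mul_of_nonneg_left hle (inv_nonneg.2 (hw.pos i).le))
  obtain ⟨n, hn⟩ := exists_nat_ge ((r - R) / κ)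
  rw [div_le_iff₀ hκ] at hn
  exact (hstep n).mono hw (indicator_le_indicator_of_subset
    (fun x (hx : ρ x ≤ r) => show ρ x ≤ R + n * κ by linarith) fun _ => zero_le_one)

lemma IsProbWeight.greenSum_le_mul_of_markovOp_le (hw : IsProbWeight w) (hB : 0 ≤ B)
    (hPV : markovOp w γ V ≤ V + B • φ) {l : ℝ} (hl : ∀ n, greenSum w γ x₀ n φ ≤ l) (N : ℕ) :
    greenSum w γ x₀ N V ≤ N * (V x₀ + B * l) := by
  have hpow : ∀ n, (markovOp w γ ^ n) V x₀ ≤ V x₀ + B * l := fun n => by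
    have hsum := hw.monotone_greenSum (γ := γ) (x₀ := x₀) (N := n) hPV
    rw [greenSum_markovOp, map_add, map_smul, smul_eq_mul] at hsum
    linarith [mul_le_mul_of_nonneg_left (hl n) hB]
  rw [greenSum_apply]
  exact (Finset.sum_le_sum fun n _ => hpow n).trans_eq
    (by rw [Finset.sum_const, Finset.card_range, nsmul_eq_mul])

-- If the Green sums stayed bounded, so would `E V(X_n)`, and by Markov's inequality the walk would
-- spend half of its time in a sublevel set of `V`, which is dominated by `φ`.
lemma IsProbWeight.tendsto_greenSum_atTop (hw : IsProbWeight w) (hφ : 0 ≤ φ) (hV : 0 ≤ V)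
    (hB : 0 ≤ B) (hPV : markovOp w γ V ≤ V + B • φ)
    (hdom : ∀ r, GreenDominated w γ φ ({x | V x ≤ r}.indicator 1)) (x₀ : X) :
    Tendsto (fun N => greenSum w γ x₀ N φ) atTop atTop := by
  refine (tendsto_atTop_of_monotone (hw.monotone_greenSum_apply hφ)).resolve_right ?_
  rintro ⟨l, hl⟩
  have hφl : ∀ N, greenSum w γ x₀ N φ ≤ l := (hw.monotone_greenSum_apply hφ).ge_of_tendsto hl
  have hl₀ : 0 ≤ l := (hw.greenSum_nonneg hφ).trans (hφl 0)
  set M := V x₀ + B * l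
  have hM₀ : 0 ≤ M := add_nonneg (hV x₀) (mul_nonneg hB hl₀)
  set r := 2 * M + 1 with hr
  have hr₀ : 0 < r := by positivity
  obtain ⟨C, hC, hCφ⟩ := hdom r
  have hone : (fun _ => 1) ≤ {x | V x ≤ r}.indicator 1 + r⁻¹ • V := fun x => by
    simp only [Pi.add_apply, Pi.smul_apply, smul_eq_mul]
    by_cases hx : V x ≤ r
    · rw [indicator_of_mem (by exact hx)]
      exact le_add_of_nonneg_right (mul_nonneg (inv_nonneg.2 hr₀.le) (hV x))
    · rw [indicator_of_notMem (by exact hx), zero_add, ← div_eq_inv_mul, one_le_div hr₀]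
      exact (not_le.1 hx).le
  have hhalf : ∀ N : ℕ, (N : ℝ) / 2 ≤ C * (l + 1) := fun N => by
    have hsum := hw.monotone_greenSum (γ := γ) (x₀ := x₀) (N := N) hone
    rw [hw.greenSum_const, mul_one, map_add, map_smul, smul_eq_mul] at hsum
    have hVN : r⁻¹ * greenSum w γ x₀ N V ≤ N / 2 := by
      rw [inv_mul_le_iff₀ hr₀]
      have := hw.greenSum_le_mul_of_markovOp_le hB hPV hφl N
      rw [hr]
      linarith [(Nat.cast_nonneg N : (0 : ℝ) ≤ N)]
    linarith [hCφ x₀ N, mul_le_mul_of_nonneg_left (hφl N) hC]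
  obtain ⟨N, hN⟩ := exists_nat_gt (2 * (C * (l + 1)))
  linarith [hhalf N]

lemma IsProbWeight.greenDominated_abs (hw : IsProbWeight w) [TopologicalSpace X] (hV : Continuous V)
    (hdom : ∀ r, GreenDominated w γ φ ({x | V x ≤ r}.indicator 1)) (hf : Continuous f)
    (hfc : HasCompactSupport f) : GreenDominated w γ φ |f| := by
  obtain ⟨r, hr⟩ := hfc.isCompact.bddAbove_image hV.continuousOn
  obtain ⟨M, hM⟩ := hfc.exists_bound_of_continuous hf
  refine ((hdom r).smul (abs_nonneg M)).mono hw fun x => ?_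
  by_cases hx : x ∈ tsupport f
  · have hVx : x ∈ {x | V x ≤ r} := hr (mem_image_of_mem V hx)
    simpa [indicator_of_mem hVx] using (hM x).trans (le_abs_self M)
  · rw [Pi.abs_apply, image_eq_zero_of_notMem_tsupport hx, abs_zero]
    exact mul_nonneg (abs_nonneg M) (indicator_nonneg (fun _ _ => zero_le_one) x)

lemma IsProbWeight.tendsto_inv_greenSum_smul_sub (hw : IsProbWeight w)
    (htop : Tendsto (fun N => greenSum w γ x₀ N φ) atTop atTop) (hf : ∀ x, |f x| ≤ c) :
    Tendsto (fun N => ((greenSum w γ x₀ N φ)⁻¹ • greenSum w γ x₀ N) (markovOp w γ f - f))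
      atTop (𝓝 0) := by
  have hbdd : IsBoundedUnder (· ≤ ·) atTop
      (norm ∘ fun N => (markovOp w γ ^ N) f x₀ - f x₀) := isBoundedUnder_of ⟨c + c, fun N =>
    (norm_sub_le _ _).trans (add_le_add (hw.abs_markovOp_pow_le hf N x₀) (hf x₀))⟩
  refine (htop.inv_tendsto_atTop.zero_mul_isBoundedUnder_le hbdd).congr fun N => ?_
  rw [LinearMap.smul_apply, map_sub, greenSum_markovOp, add_sub_cancel_left, smul_eq_mul,
    Pi.inv_apply]

end Green

section Riesz

variable {α ι X : Type*} [TopologicalSpace X] [T2Space X] [LocallyCompactSpace X]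
  [MeasurableSpace X] [BorelSpace X]

open CompactlySupported in
lemma exists_measure_tendsto_integral (U : Ultrafilter α) {u : α → (X → ℝ) →ₗ[ℝ] ℝ}
    (hmono : ∀ a, Monotone (u a))
    (hbdd : ∀ f, Continuous f → HasCompactSupport f → ∃ D, ∀ᶠ a in U, |u a f| ≤ D) :
    ∃ ν : Measure X, ν.Regular ∧ ∀ f, Continuous f → HasCompactSupport f →
      Tendsto (fun a => u a f) U (𝓝 (∫ x, f x ∂ν)) := by
  have hlim : ∀ f : C_c(X, ℝ), ∃ l, Tendsto (fun a => u a f) U (𝓝 l) := fun f => by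
    obtain ⟨D, hD⟩ := hbdd f f.continuous f.hasCompactSupport
    obtain ⟨l, -, hl⟩ := isCompact_Icc.ultrafilter_le_nhds' (U.map fun a => u a f)
      (hD.mono fun _ => abs_le.1)
    exact ⟨l, hl⟩
  choose l hl using hlim
  let L : C_c(X, ℝ) →ₗ[ℝ] ℝ :=
    { toFun := l
      map_add' := fun f f' => tendsto_nhds_unique (hl (f + f')) <|
        ((hl f).add (hl f')).congr fun a => (map_add (u a) ⇑f ⇑f').symm
      map_smul' := fun c f => tendsto_nhds_unique (hl (c • f)) <|
        ((hl f).const_smul c).congr fun a => (map_smul (u a) c ⇑f).symm }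
  have hL : ∀ f, 0 ≤ f → 0 ≤ L f := fun f hf =>
    ge_of_tendsto' (hl f) fun a => (map_zero (u a)).symm.trans_le (hmono a hf)
  refine ⟨RealRMK.rieszMeasure (PositiveLinearMap.mk₀ L hL), inferInstance,
    fun f hf hfc => ?_⟩
  have hint := RealRMK.integral_rieszMeasure (PositiveLinearMap.mk₀ L hL) ⟨⟨f, hf⟩, hfc⟩
  exact hint ▸ hl ⟨⟨f, hf⟩, hfc⟩

variable [Fintype ι] {w : ι → ℝ} {e : ι → X ≃ₜ X} {φ V : X → ℝ} {B : ℝ}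

theorem exists_isStationary [Nonempty X] (hw : IsProbWeight w) (hφ : 0 ≤ φ)
    (hφ_cont : Continuous φ) (hφ_supp : HasCompactSupport φ) (hV : 0 ≤ V) (hV_cont : Continuous V)
    (hB : 0 ≤ B) (hPV : markovOp w (fun i => e i) V ≤ V + B • φ)
    (hdom : ∀ r, GreenDominated w (fun i => e i) φ ({x | V x ≤ r}.indicator 1)) :
    ∃ ν : Measure X, ν.Regular ∧ ν ≠ 0 ∧ IsStationary w (fun i => e i) ν := by
  obtain ⟨x₀⟩ := ‹Nonempty X›
  have htop := hw.tendsto_greenSum_atTop hφ hV hB hPV hdom x₀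
  set u := fun N => (greenSum w (fun i => e i) x₀ N φ)⁻¹ • greenSum w (fun i => e i) x₀ N
  have hU : (hyperfilter ℕ : Filter ℕ) ≤ atTop := Nat.cofinite_eq_atTop ▸ hyperfilter_le_cofinite
  obtain ⟨ν, hν, hlim⟩ := exists_measure_tendsto_integral (hyperfilter ℕ) (u := u)
    (fun N f f' h => mul_le_mul_of_nonneg_left (hw.monotone_greenSum h)
      (inv_nonneg.2 (hw.greenSum_nonneg hφ)))
    fun f hf hfc =>
      let ⟨D, hD⟩ := (hw.greenDominated_abs hV_cont hdom hf hfc).exists_eventually_abs_le hw htop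
      ⟨D, hU hD⟩
  refine ⟨ν, hν, fun h0 => ?_, fun f hf hfc => ?_⟩
  · have hone : Tendsto (fun N => u N φ) (hyperfilter ℕ) (𝓝 1) :=
      tendsto_const_nhds.congr' <| hU <| (htop.eventually_gt_atTop 0).mono fun N hN =>
        (inv_mul_cancel₀ hN.ne').symm
    simpa [h0] using tendsto_nhds_unique hone (hlim φ hφ_cont hφ_supp)
  · obtain ⟨M, hM⟩ := hfc.exists_bound_of_continuous hf
    have hzero := (hw.tendsto_inv_greenSum_smul_sub htop hM).mono_left hU
    have hsum : Tendsto (fun N => ∑ i, w i * u N (f ∘ e i)) (hyperfilter ℕ)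
        (𝓝 (∑ i, w i * ∫ x, f (e i x) ∂ν)) := tendsto_finsetSum _ fun i _ =>
      (hlim _ (hf.comp (e i).continuous) (hfc.comp_homeomorph (e i))).const_mul (w i)
    refine (eq_of_sub_eq_zero (tendsto_nhds_unique ((hsum.sub (hlim f hf hfc)).congr fun N => ?_)
      hzero)).symm
    have hPf : markovOp w (fun i => e i) f = ∑ i, w i • (f ∘ e i) := by
      ext x
      simp [markovOp_apply]
    rw [map_sub, hPf, map_sum]
    simp only [map_smul, smul_eq_mul, u]

end Riesz

/-- The Lyapunov function of a walk on the line whose drift points inwards at both ends. -/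
noncomputable def lyapunov (A s : ℝ) : ℝ := |s| + A * (1 - Real.exp (-|s|))

section Lyapunov

variable {A : ℝ}

lemma continuous_lyapunov (A : ℝ) : Continuous (lyapunov A) := by
  unfold lyapunov
  fun_prop

lemma lyapunov_neg (A s : ℝ) : lyapunov A (-s) = lyapunov A s := by
  rw [lyapunov, lyapunov, abs_neg]

lemma lyapunov_of_nonneg (A : ℝ) {s : ℝ} (hs : 0 ≤ s) :
    lyapunov A s = s - A * Real.exp (-s) + A := by
  rw [lyapunov, abs_of_nonneg hs]
  ring

lemma abs_le_lyapunov (hA : 0 ≤ A) (s : ℝ) : |s| ≤ lyapunov A s :=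
  le_add_of_nonneg_right (mul_nonneg hA (sub_nonneg.2 (Real.exp_le_one_iff.2 (by simp))))

lemma lyapunov_le (hA : 0 ≤ A) (s : ℝ) : lyapunov A s ≤ |s| + A := by
  rw [lyapunov, add_le_add_iff_left]
  exact mul_le_of_le_one_right hA (sub_le_self 1 (Real.exp_pos _).le)

end Lyapunov

section LineExistence

variable {ι : Type*} [Fintype ι] {w m mp mm : ι → ℝ} {g : ι → ℝ → ℝ} {A B K : ℝ}

namespace AsympTranslation

lemma nonneg_apply (S : AsympTranslation w m g B K) (i : ι) {s : ℝ} (hs : K ≤ s) : 0 ≤ g i s := by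
  linarith [(abs_le.1 (S.abs_sub_le i s)).1]

lemma exists_markovOp_lyapunov_le (S : AsympTranslation w m g B K) (hm : ∑ i, w i * m i ≤ 0) :
    ∃ A₀ ≥ 0, ∃ R, ∀ A ≥ A₀, ∀ s ≥ R, markovOp w g (lyapunov A) s ≤ lyapunov A s := by
  obtain ⟨A₀, hA₀, R, hR⟩ := S.exists_superharmonic_sub_exp hm
  refine ⟨A₀, hA₀, max R (max K 0), fun A hA s hs => ?_⟩
  obtain ⟨hRs, hKs, hs₀⟩ : R ≤ s ∧ K ≤ s ∧ 0 ≤ s := by simpa using hs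
  calc markovOp w g (lyapunov A) s
      ≤ markovOp w g ((fun t => t - A * Real.exp (-t)) + fun _ => A) s :=
        S.isProbWeight.markovOp_le_markovOp fun i =>
          (lyapunov_of_nonneg A (S.nonneg_apply i hKs)).le
    _ = markovOp w g (fun t => t - A * Real.exp (-t)) s + A := by
        rw [map_add, S.isProbWeight.markovOp_const, Pi.add_apply]
    _ ≤ lyapunov A s := by
        rw [lyapunov_of_nonneg A hs₀]
        exact add_le_add_left (hR A hA s hRs) A

lemma exists_abs_le_abs_sub (S : AsympTranslation w (-m) g B K) {i : ι} (hi : 0 < m i) :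
    ∃ T, ∀ s ≥ T, |g i s| ≤ |s| - m i / 2 := by
  obtain ⟨T, hT⟩ := eventually_atTop.1
    ((tendsto_const_mul_exp_neg B).eventually_le_const (half_pos hi))
  refine ⟨max T (max K 0), fun s hs => ?_⟩
  obtain ⟨hTs, hKs, hs₀⟩ : T ≤ s ∧ K ≤ s ∧ 0 ≤ s := by simpa using hs
  have hgi := (abs_le.1 (S.abs_sub_sub_le i s)).2
  rw [Pi.neg_apply] at hgi
  rw [abs_of_nonneg hs₀, abs_of_nonneg (S.nonneg_apply i hKs)]
  linarith [hT s hTs]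

end AsympTranslation

lemma markovOp_lyapunov_neg (w : ι → ℝ) (g : ι → ℝ → ℝ) (A s : ℝ) :
    markovOp w (fun i t => -g i (-t)) (lyapunov A) (-s) = markovOp w g (lyapunov A) s := by
  simp only [markovOp_apply, neg_neg, lyapunov_neg]

lemma markovOp_lyapunov_le_of_abs_le (hw : IsProbWeight w) (hgK : ∀ i s, |g i s - s| ≤ K)
    (hA : 0 ≤ A) {R s : ℝ} (hs : |s| ≤ R) : markovOp w g (lyapunov A) s ≤ R + K + A :=
  hw.markovOp_le fun i => (lyapunov_le hA _).trans <| by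
    linarith [abs_sub_abs_le_abs_sub (g i s) s, hgK i s]

lemma exists_isStationary_of_forall_lt_abs {e : ι → ℝ ≃ₜ ℝ} (hw : IsProbWeight w)
    (heK : ∀ i s, |e i s - s| ≤ K) (hA : 0 ≤ A) {R κ : ℝ} (hκ : 0 < κ)
    (hV : ∀ s, R < |s| → markovOp w (fun i => e i) (lyapunov A) s ≤ lyapunov A s) {i : ι}
    (hi : ∀ s, R < |s| → |e i s| ≤ |s| - κ) :
    ∃ ν : Measure ℝ, ν.Regular ∧ ν ≠ 0 ∧ IsStationary w (fun i => e i) ν := by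
  obtain ⟨φ, hφ_one, -, hφ_supp, hφ⟩ := exists_continuous_one_zero_of_isCompact
    (isCompact_closedBall (0 : ℝ) R) isClosed_empty (disjoint_empty _)
  have hφR : ∀ s, |s| ≤ R → φ s = 1 := fun s hs => hφ_one (by simpa using hs)
  have hφ₀ : 0 ≤ ⇑φ := fun s => (hφ s).1
  have hV₀ : 0 ≤ lyapunov A := fun s => (abs_nonneg s).trans (abs_le_lyapunov hA s)
  refine exists_isStationary (B := |R + K + A|) hw hφ₀ φ.continuous hφ_supp hV₀
    (continuous_lyapunov A) (abs_nonneg _) (fun s => ?_) fun r => ?_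
  · rcases le_or_gt |s| R with hs | hs
    · have hle := markovOp_lyapunov_le_of_abs_le hw heK hA hs
      simp only [Pi.add_apply, Pi.smul_apply, hφR s hs, smul_eq_mul, mul_one]
      exact (hle.trans (le_abs_self _)).trans (le_add_of_nonneg_left (hV₀ s))
    · exact (hV s hs).trans (le_add_of_nonneg_right (mul_nonneg (abs_nonneg _) (hφ₀ s)))
  · exact (hw.greenDominated_indicator hφ₀ hκ (fun s hs => (hφR s hs).ge) hi r).mono hw
      (indicator_le_indicator_of_subset (fun s hs => (abs_le_lyapunov hA s).trans hs)
        fun _ => zero_le_one)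

theorem exists_isStationary_of_asympTranslation {e : ι → ℝ ≃ₜ ℝ}
    (hr : AsympTranslation w (-mp) (fun i => e i) B K)
    (hl : AsympTranslation w (-mm) (fun i s => -e i (-s)) B K)
    (hmp : 0 ≤ ∑ i, w i * mp i) (hmm : 0 ≤ ∑ i, w i * mm i) (hpos : ∃ i, 0 < mp i ∧ 0 < mm i) :
    ∃ ν : Measure ℝ, ν.Regular ∧ ν ≠ 0 ∧ IsStationary w (fun i => e i) ν := by
  obtain ⟨i, hip, him⟩ := hpos
  obtain ⟨A₁, hA₁, R₁, hV₁⟩ := hr.exists_markovOp_lyapunov_le (by simpa using hmp)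
  obtain ⟨A₂, -, R₂, hV₂⟩ := hl.exists_markovOp_lyapunov_le (by simpa using hmm)
  obtain ⟨T₁, hT₁⟩ := hr.exists_abs_le_abs_sub hip
  obtain ⟨T₂, hT₂⟩ := hl.exists_abs_le_abs_sub him
  obtain ⟨R, ⟨hR₁, hR₂⟩, hT₁R, hT₂R⟩ : ∃ R, (R₁ ≤ R ∧ R₂ ≤ R) ∧ T₁ ≤ R ∧ T₂ ≤ R :=
    ⟨max (max R₁ R₂) (max T₁ T₂), by simp⟩
  refine exists_isStationary_of_forall_lt_abs (A := max A₁ A₂) (κ := min (mp i) (mm i) / 2) (R := R)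
    hr.isProbWeight hr.abs_sub_le (hA₁.trans (le_max_left ..)) (half_pos (lt_min hip him))
    (fun s hs => ?_) (i := i) fun s hs => ?_
  · rcases lt_abs.1 hs with hs | hs
    · exact hV₁ _ (le_max_left ..) s (hR₁.trans hs.le)
    · rw [← markovOp_lyapunov_neg, ← lyapunov_neg]
      exact hV₂ _ (le_max_right ..) (-s) (hR₂.trans hs.le)
  · rcases lt_abs.1 hs with hs | hs
    · linarith [hT₁ s (hT₁R.trans hs.le), min_le_left (mp i) (mm i)]
    · have hle := hT₂ (-s) (hT₂R.trans hs.le)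
      rw [neg_neg, abs_neg, abs_neg] at hle
      linarith [min_le_right (mp i) (mm i)]

end LineExistence

/-! ### Conjugation of interval homeomorphisms to the line -/

section Asymptotics

open Asymptotics

/-- `φ` restricts to an increasing homeomorphism of `[0, 1]` with multipliers `a` at `0` and `b` at
`1`, approximated to second order by its linear parts there. -/
structure HasEndMultipliers (φ : ℝ → ℝ) (a b : ℝ) : Prop where
  map_zero : φ 0 = 0
  map_one : φ 1 = 1
  strictMonoOn : StrictMonoOn φ (Icc 0 1)
  continuousOn : ContinuousOn φ (Icc 0 1)
  pos_zero : 0 < a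
  pos_one : 0 < b
  isBigO_zero : (fun x => φ x - a * x) =O[𝓝[>] 0] fun x => x ^ 2
  isBigO_one : (fun x => 1 - φ (1 - x) - b * x) =O[𝓝[>] 0] fun x => x ^ 2

variable {φ E : ℝ → ℝ} {a b : ℝ}

lemma one_sub_mem_Icc {x : ℝ} (hx : x ∈ Icc (0 : ℝ) 1) : 1 - x ∈ Icc (0 : ℝ) 1 :=
  ⟨sub_nonneg.2 hx.2, sub_le_self 1 hx.1⟩

lemma isBigO_sub_derivWithin_mul (hφ : ContDiffOn ℝ 2 φ (Icc 0 1)) (h₀ : φ 0 = 0) :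
    (fun x => φ x - derivWithin φ (Icc 0 1) 0 * x) =O[𝓝[>] 0] fun x => x ^ 2 := by
  obtain ⟨C, hC⟩ := exists_taylor_mean_remainder_bound (f := φ) (n := 1) (zero_le_one' ℝ)
    (by simpa [one_add_one_eq_two] using hφ)
  refine IsBigO.of_bound C ?_
  filter_upwards [Ioo_mem_nhdsGT one_pos] with x hx
  simpa [taylorWithinEval_succ, h₀, mul_comm x] using hC x (Ioo_subset_Icc_self hx)

lemma derivWithin_one_sub_comp_one_sub (hφ : ContDiffOn ℝ 2 φ (Icc 0 1)) :
    derivWithin (fun x => 1 - φ (1 - x)) (Icc 0 1) 0 = derivWithin φ (Icc 0 1) 1 := by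
  have hφ' : HasDerivWithinAt φ (derivWithin φ (Icc 0 1) 1) (Icc 0 1) (1 - 0) := by
    rw [sub_zero]
    exact (hφ.differentiableOn two_ne_zero 1 (right_mem_Icc.2 zero_le_one)).hasDerivWithinAt
  have hrefl : HasDerivWithinAt (fun x : ℝ => 1 - x) (-1) (Icc 0 1) 0 :=
    ((hasDerivAt_id 0).const_sub 1).hasDerivWithinAt
  have hcomp := (hφ'.comp 0 hrefl fun x => one_sub_mem_Icc).const_sub 1
  simpa [comp_def] using
    hcomp.derivWithin (uniqueDiffOn_Icc zero_lt_one 0 (left_mem_Icc.2 zero_le_one))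

namespace HasEndMultipliers

lemma of_contDiffOn (hφ : ContDiffOn ℝ 2 φ (Icc 0 1)) (h₀ : φ 0 = 0) (h₁ : φ 1 = 1)
    (hmono : StrictMonoOn φ (Icc 0 1)) (hpos₀ : 0 < derivWithin φ (Icc 0 1) 0)
    (hpos₁ : 0 < derivWithin φ (Icc 0 1) 1) :
    HasEndMultipliers φ (derivWithin φ (Icc 0 1) 0) (derivWithin φ (Icc 0 1) 1) where
  map_zero := h₀
  map_one := h₁
  strictMonoOn := hmono
  continuousOn := hφ.continuousOn
  pos_zero := hpos₀
  pos_one := hpos₁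
  isBigO_zero := isBigO_sub_derivWithin_mul hφ h₀
  isBigO_one := derivWithin_one_sub_comp_one_sub hφ ▸ isBigO_sub_derivWithin_mul
    (contDiffOn_const.sub (hφ.comp (contDiffOn_const.sub contDiffOn_id) fun x => one_sub_mem_Icc))
    (by simp [h₁])

lemma reflect (hφ : HasEndMultipliers φ a b) :
    HasEndMultipliers (fun x => 1 - φ (1 - x)) b a where
  map_zero := by simp [hφ.map_one]
  map_one := by simp [hφ.map_zero]
  strictMonoOn x hx y hy hxy := sub_lt_sub_left
    (hφ.strictMonoOn (one_sub_mem_Icc hy) (one_sub_mem_Icc hx) (sub_lt_sub_left hxy 1)) 1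
  continuousOn := continuousOn_const.sub
    (hφ.continuousOn.comp (by fun_prop) fun x => one_sub_mem_Icc)
  pos_zero := hφ.pos_one
  pos_one := hφ.pos_zero
  isBigO_zero := hφ.isBigO_one
  isBigO_one := by simpa using hφ.isBigO_zero

lemma mapsTo_Ioo (hφ : HasEndMultipliers φ a b) : MapsTo φ (Ioo 0 1) (Ioo 0 1) := fun x hx => by
  have hx' := Ioo_subset_Icc_self hx
  have hlow := hφ.strictMonoOn (left_mem_Icc.2 zero_le_one) hx' hx.1
  have hupp := hφ.strictMonoOn hx' (right_mem_Icc.2 zero_le_one) hx.2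
  rw [hφ.map_zero] at hlow
  rw [hφ.map_one] at hupp
  exact ⟨hlow, hupp⟩

lemma surjOn_Ioo (hφ : HasEndMultipliers φ a b) : SurjOn φ (Ioo 0 1) (Ioo 0 1) := by
  have hivt := intermediate_value_Ioo zero_le_one hφ.continuousOn
  rwa [hφ.map_zero, hφ.map_one] at hivt

lemma isBigO_div_sub (hφ : HasEndMultipliers φ a b) :
    (fun x => φ x / x - a) =O[𝓝[>] 0] fun x => x := by
  have hmul := hφ.isBigO_zero.mul (isBigO_refl (fun x : ℝ => x⁻¹) (𝓝[>] 0))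
  refine hmul.congr' ?_ ?_ <;> filter_upwards [self_mem_nhdsWithin] with x (hx : 0 < x)
  · field_simp
  · field_simp

lemma isBigO_log_div_sub (hφ : HasEndMultipliers φ a b) :
    (fun x => Real.log (φ x / x) - Real.log a) =O[𝓝[>] 0] fun x => x := by
  have hid : Tendsto (fun x : ℝ => x) (𝓝[>] 0) (𝓝 0) := tendsto_id.mono_left nhdsWithin_le_nhds
  have hlim : Tendsto (fun x => φ x / x) (𝓝[>] 0) (𝓝 a) := by
    simpa using (hφ.isBigO_div_sub.trans_tendsto hid).add_const a
  exact ((Real.differentiableAt_log hφ.pos_zero.ne').isBigO_sub.comp_tendsto hlim).trans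
    hφ.isBigO_div_sub

lemma isBigO_log_one_sub_div (hφ : HasEndMultipliers φ a b) :
    (fun x => Real.log ((1 - φ x) / (1 - x))) =O[𝓝[>] 0] fun x => x := by
  have hid : Tendsto (fun x : ℝ => x) (𝓝[>] 0) (𝓝 0) := tendsto_id.mono_left nhdsWithin_le_nhds
  have hφO : φ =O[𝓝[>] 0] fun x => x := by
    have hsq : (fun x : ℝ => x ^ 2) =O[𝓝[>] 0] fun x => x :=
      (isLittleO_pow_id one_lt_two).isBigO.mono nhdsWithin_le_nhds
    simpa using (hφ.isBigO_zero.trans hsq).add (isBigO_const_mul_self a (fun x : ℝ => x) _)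
  have hinv : (fun x : ℝ => (1 - x)⁻¹) =O[𝓝[>] 0] fun _ => (1 : ℝ) :=
    ((tendsto_const_nhds.sub hid).inv₀ (by simp)).isBigO_one ℝ
  have hO : (fun x => (1 - φ x) / (1 - x) - 1) =O[𝓝[>] 0] fun x => x := by
    refine (((isBigO_refl (fun x : ℝ => x) _).sub hφO).mul hinv).congr' ?_ (by simp)
    filter_upwards [Ioo_mem_nhdsGT one_pos] with x hx
    have := (sub_pos.2 hx.2).ne'
    field_simp
    ring
  have hlim : Tendsto (fun x => (1 - φ x) / (1 - x)) (𝓝[>] 0) (𝓝 1) := by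
    simpa using (hO.trans_tendsto hid).add_const 1
  simpa [comp_def] using
    ((Real.differentiableAt_log one_ne_zero).isBigO_sub.comp_tendsto hlim).trans hO

end HasEndMultipliers

lemma sigmoid_mem_Ioo (s : ℝ) : Real.sigmoid s ∈ Ioo (0 : ℝ) 1 :=
  ⟨Real.sigmoid_pos s, Real.sigmoid_lt_one s⟩

lemma log_sigmoid_sub_log_one_sub_sigmoid (s : ℝ) :
    Real.log (Real.sigmoid s) - Real.log (1 - Real.sigmoid s) = s := by
  rw [← Real.sigmoid_neg, ← Real.sigmoid_mul_rexp_neg,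
    Real.log_mul (Real.sigmoid_pos s).ne' (Real.exp_pos _).ne', Real.log_exp]
  ring

lemma sigmoid_le_exp (s : ℝ) : Real.sigmoid s ≤ Real.exp s := by
  have hs := Real.sigmoid_mul_rexp_neg (-s)
  rw [neg_neg] at hs
  exact hs.symm.trans_le (mul_le_of_le_one_left (Real.exp_pos s).le (Real.sigmoid_le_one _))

lemma semiconj_sigmoid_reflect (hE : Semiconj Real.sigmoid E φ) :
    Semiconj Real.sigmoid (fun s => -E (-s)) fun x => 1 - φ (1 - x) := fun s => by
  rw [Real.sigmoid_neg, hE.eq, Real.sigmoid_neg]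

namespace HasEndMultipliers

lemma exists_orderIso (hφ : HasEndMultipliers φ a b) :
    ∃ e : ℝ ≃o ℝ, Semiconj Real.sigmoid e φ := by
  have hex : ∀ s, ∃ t, Real.sigmoid t = φ (Real.sigmoid s) := fun s => by
    rw [← mem_range, Real.range_sigmoid]
    exact hφ.mapsTo_Ioo (sigmoid_mem_Ioo s)
  choose E hE using hex
  have hmono : StrictMono E := fun s t hst => by
    rw [← Real.sigmoid_lt_iff, hE, hE]
    exact hφ.strictMonoOn (Ioo_subset_Icc_self (sigmoid_mem_Ioo s))
      (Ioo_subset_Icc_self (sigmoid_mem_Ioo t)) (Real.sigmoid_lt hst)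
  have hsurj : Surjective E := fun t => by
    obtain ⟨y, hy, hyt⟩ := hφ.surjOn_Ioo (sigmoid_mem_Ioo t)
    rw [← Real.range_sigmoid] at hy
    obtain ⟨s, rfl⟩ := hy
    exact ⟨s, Real.sigmoid_injective (by rw [hE, hyt])⟩
  exact ⟨hmono.orderIsoOfSurjective E hsurj, hE⟩

lemma sub_eq_log_sub_log (hφ : HasEndMultipliers φ a b) (hE : Semiconj Real.sigmoid E φ) (s : ℝ) :
    E s - s = Real.log (φ (Real.sigmoid s) / Real.sigmoid s) -
      Real.log ((1 - φ (Real.sigmoid s)) / (1 - Real.sigmoid s)) := by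
  have hs := sigmoid_mem_Ioo s
  have hφs := hφ.mapsTo_Ioo hs
  rw [Real.log_div hφs.1.ne' hs.1.ne', Real.log_div (sub_pos.2 hφs.2).ne' (sub_pos.2 hs.2).ne']
  have hEs := log_sigmoid_sub_log_one_sub_sigmoid (E s)
  rw [hE.eq] at hEs
  linarith [log_sigmoid_sub_log_one_sub_sigmoid s]

lemma isBigO_sub_sub_log_atBot (hφ : HasEndMultipliers φ a b) (hE : Semiconj Real.sigmoid E φ) :
    (fun s => E s - s - Real.log a) =O[atBot] Real.exp := by
  have hσ : Tendsto Real.sigmoid atBot (𝓝[>] 0) :=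
    tendsto_nhdsWithin_iff.2 ⟨Real.tendsto_sigmoid_atBot, .of_forall Real.sigmoid_pos⟩
  have hlog := (hφ.isBigO_log_div_sub.sub hφ.isBigO_log_one_sub_div).comp_tendsto hσ
  refine (hlog.congr_left fun s => ?_).trans (isBigO_of_le _ fun s => ?_)
  · rw [hφ.sub_eq_log_sub_log hE, comp_apply]
    ring
  · rw [comp_apply, Real.norm_of_nonneg (Real.sigmoid_nonneg s),
      Real.norm_of_nonneg (Real.exp_pos s).le]
    exact sigmoid_le_exp s

lemma isBigO_sub_add_log_atTop (hφ : HasEndMultipliers φ a b) (hE : Semiconj Real.sigmoid E φ) :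
    (fun s => E s - s + Real.log b) =O[atTop] fun s => Real.exp (-s) := by
  have hneg := (hφ.reflect.isBigO_sub_sub_log_atBot (semiconj_sigmoid_reflect hE)).comp_tendsto
    tendsto_neg_atTop_atBot
  refine hneg.neg_left.congr_left fun s => ?_
  simp only [comp_apply, neg_neg]
  ring

end HasEndMultipliers

lemma exists_forall_abs_le_of_isBigO_one {f : ℝ → ℝ} (hf : Continuous f)
    (hbot : f =O[atBot] fun _ => (1 : ℝ)) (htop : f =O[atTop] fun _ => (1 : ℝ)) :
    ∃ K, ∀ s, |f s| ≤ K := by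
  obtain ⟨C, hC⟩ := (hbot.sup htop).bound
  rw [← cocompact_eq_atBot_atTop] at hC
  obtain ⟨S, hS, hSC⟩ := mem_cocompact.1 hC
  obtain ⟨M, hM⟩ := hS.exists_bound_of_continuousOn hf.continuousOn
  refine ⟨max M C, fun s => ?_⟩
  by_cases hs : s ∈ S
  · exact (hM s hs).trans (le_max_left ..)
  · exact le_max_of_le_right (by simpa using hSC hs)

lemma exists_forall_abs_le_mul_exp_neg {f : ℝ → ℝ} {K : ℝ} (hK : ∀ s, |f s| ≤ K)
    (hf : f =O[atTop] fun s => Real.exp (-s)) : ∃ B, ∀ s, |f s| ≤ B * Real.exp (-s) := by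
  obtain ⟨C, hC⟩ := hf.bound
  obtain ⟨T, hT⟩ := eventually_atTop.1 hC
  refine ⟨max C (K * Real.exp T), fun s => ?_⟩
  rcases le_total T s with hs | hs
  · calc |f s| ≤ C * Real.exp (-s) := by simpa using hT s hs
      _ ≤ _ := by gcongr; exact le_max_left ..
  · have hK₀ : 0 ≤ K := (abs_nonneg _).trans (hK s)
    calc |f s| ≤ K * 1 := by rw [mul_one]; exact hK s
      _ ≤ K * Real.exp (T + -s) := by gcongr; exact Real.one_le_exp (by linarith)
      _ = K * Real.exp T * Real.exp (-s) := by rw [Real.exp_add, mul_assoc]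
      _ ≤ _ := by gcongr; exact le_max_right ..

lemma HasEndMultipliers.exists_abs_le (hφ : HasEndMultipliers φ a b)
    (hE : Semiconj Real.sigmoid E φ) (hE_cont : Continuous E) :
    ∃ K B, (∀ s, |E s - s| ≤ K) ∧ (∀ s, |E s - s + Real.log b| ≤ B * Real.exp (-s)) := by
  have hexp_bot : Real.exp =O[atBot] fun _ => (1 : ℝ) := Real.tendsto_exp_atBot.isBigO_one ℝ
  have hexp_top : (fun s => Real.exp (-s)) =O[atTop] fun _ => (1 : ℝ) :=
    Real.tendsto_exp_neg_atTop_nhds_zero.isBigO_one ℝ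
  have hone : ∀ (c : ℝ) (l : Filter ℝ), (fun _ : ℝ => c) =O[l] fun _ => (1 : ℝ) := fun c l =>
    isBigO_const_const c one_ne_zero l
  obtain ⟨K, hK⟩ := exists_forall_abs_le_of_isBigO_one (f := fun s => E s - s) (by fun_prop)
    (by simpa using ((hφ.isBigO_sub_sub_log_atBot hE).trans hexp_bot).add (hone (Real.log a) _))
    (by simpa using ((hφ.isBigO_sub_add_log_atTop hE).trans hexp_top).sub (hone (Real.log b) _))
  obtain ⟨B, hB⟩ := exists_forall_abs_le_mul_exp_neg
    (fun s => (abs_add_le _ _).trans (add_le_add_left (hK s) |Real.log b|))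
    (hφ.isBigO_sub_add_log_atTop hE)
  exact ⟨K, B, hK, hB⟩

end Asymptotics

section Family

variable {ι : Type*} [Fintype ι] {w m mp mm a b : ι → ℝ} {h g g' : ι → ℝ → ℝ} {B K : ℝ}

lemma exists_asympTranslation (hw : IsProbWeight w)
    (hh : ∀ i, HasEndMultipliers (h i) (a i) (b i)) (hgh : ∀ i, Semiconj Real.sigmoid (g i) (h i))
    (hg : ∀ i, Continuous (g i)) (hb : ∃ i, 1 < b i) :
    ∃ B₀ K₀, ∀ B ≥ B₀, ∀ K ≥ K₀, AsympTranslation w (-fun i => Real.log (b i)) g B K := by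
  choose K B hK hB using fun i => (hh i).exists_abs_le (hgh i) (hg i)
  obtain ⟨B₀, hB₀⟩ := Finite.exists_le B
  obtain ⟨K₀, hK₀⟩ := Finite.exists_le K
  obtain ⟨i, hi⟩ := hb
  refine ⟨B₀, K₀, fun B' hB' K' hK' => ⟨hw, ⟨i, neg_ne_zero.2 (Real.log_pos hi).ne'⟩,
    fun i s => ?_, fun i s => (hK i s).trans ((hK₀ i).trans hK')⟩⟩
  rw [Pi.neg_apply, sub_neg_eq_add]
  exact (hB i s).trans (mul_le_mul_of_nonneg_right ((hB₀ i).trans hB') (Real.exp_pos _).le)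

lemma exists_asympTranslation_both_ends (hw : IsProbWeight w)
    (hh : ∀ i, HasEndMultipliers (h i) (a i) (b i)) (hgh : ∀ i, Semiconj Real.sigmoid (g i) (h i))
    (hg : ∀ i, Continuous (g i)) (hab : ∃ i, 1 < a i ∧ 1 < b i) :
    ∃ B K, AsympTranslation w (-fun i => Real.log (b i)) g B K ∧
      AsympTranslation w (-fun i => Real.log (a i)) (fun i s => -g i (-s)) B K := by
  obtain ⟨i, hai, hbi⟩ := hab
  obtain ⟨B₁, K₁, hr⟩ := exists_asympTranslation hw hh hgh hg ⟨i, hbi⟩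
  obtain ⟨B₂, K₂, hl⟩ := exists_asympTranslation hw (fun i => (hh i).reflect)
    (fun i => semiconj_sigmoid_reflect (hgh i))
    (fun i => ((hg i).comp continuous_neg).neg) ⟨i, hai⟩
  exact ⟨max B₁ B₂, max K₁ K₂, hr _ (le_max_left ..) _ (le_max_left ..),
    hl _ (le_max_right ..) _ (le_max_right ..)⟩

lemma AsympTranslation.of_rightInverse (S : AsympTranslation w (-m) g B K)
    (hg : ∀ i, RightInverse (g' i) (g i)) : AsympTranslation w m g' (B * Real.exp K) K := by
  have hK : ∀ i s, |g' i s - s| ≤ K := fun i s => by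
    simpa only [(hg i).eq, abs_sub_comm] using S.abs_sub_le i (g' i s)
  refine ⟨S.isProbWeight, by simpa using S.exists_ne_zero, fun i s => ?_, hK⟩
  have hB : 0 ≤ B := nonneg_of_mul_nonneg_left
    ((abs_nonneg _).trans (S.abs_sub_sub_le i s)) (Real.exp_pos (-s))
  calc |g' i s - s - m i| = |g i (g' i s) - g' i s - (-m) i| := by
        rw [(hg i).eq, ← abs_neg, Pi.neg_apply]
        ring_nf
    _ ≤ B * Real.exp (-g' i s) := S.abs_sub_sub_le i (g' i s)
    _ ≤ B * Real.exp (K + -s) := by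
        gcongr
        linarith [(abs_le.1 (hK i s)).1]
    _ = B * Real.exp K * Real.exp (-s) := by rw [Real.exp_add, mul_assoc]

lemma twoSidedWalk_symm {e : ι → ℝ ≃o ℝ} (hr : AsympTranslation w (-mp) (fun i => e i) B K)
    (hl : AsympTranslation w (-mm) (fun i s => -e i (-s)) B K)
    (hmp : 0 ≤ ∑ i, w i * mp i) (hmm : 0 ≤ ∑ i, w i * mm i) (hpos : ∃ i, 0 < mp i ∧ 0 < mm i)
    (hlt : ∀ s, ∃ i, e i s < s) (hgt : ∀ s, ∃ i, s < e i s) :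
    TwoSidedWalk w mp mm (fun i => (e i).symm) (B * Real.exp K) K where
  right :=
    { hr.of_rightInverse fun i => (e i).apply_symm_apply with
      drift_nonneg := hmp
      strictMono := fun i => (e i).symm.strictMono
      continuous := fun i => (e i).symm.continuous
      exists_gt := fun s => (hlt s).imp fun i => (e i).lt_symm_apply.2
      exists_lt := fun s => (hgt s).imp fun i => (e i).symm_apply_lt.2 }
  left :=
    { hl.of_rightInverse (g' := fun i s => -(e i).symm (-s)) fun i s => by simp with
      drift_nonneg := hmm
      strictMono := fun i s t hst => neg_lt_neg ((e i).symm.strictMono (neg_lt_neg hst))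
      continuous := fun i => ((e i).symm.continuous.comp continuous_neg).neg
      exists_gt := fun s => (hgt (-s)).imp fun i hi =>
        lt_neg_of_lt_neg ((e i).symm_apply_lt.2 hi)
      exists_lt := fun s => (hlt (-s)).imp fun i hi =>
        neg_lt_of_neg_lt ((e i).lt_symm_apply.2 hi) }
  exists_pos := hpos

end Family

section Transfer

variable {ι : Type*} [Fintype ι] {w : ι → ℝ} {h g : ι → ℝ → ℝ} {ν : Measure ℝ}

lemma isOpenEmbedding_sigmoid : IsOpenEmbedding Real.sigmoid :=
  ⟨Real.sigmoid_strictMono.isEmbedding_of_ordConnected (Real.range_sigmoid ▸ ordConnected_Ioo),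
    Real.range_sigmoid ▸ isOpen_Ioo⟩

lemma measurableEmbedding_real_sigmoid : MeasurableEmbedding Real.sigmoid :=
  isOpenEmbedding_sigmoid.measurableEmbedding

lemma isCompact_preimage_sigmoid {K : Set ℝ} (hK : K ⊆ Ioo 0 1) (hKc : IsCompact K) :
    IsCompact (Real.sigmoid ⁻¹' K) :=
  isOpenEmbedding_sigmoid.isInducing.isCompact_preimage' hKc (Real.range_sigmoid ▸ hK)

lemma isRadonOn01_map_sigmoid [IsFiniteMeasureOnCompacts ν] :
    IsRadonOn01 (ν.map Real.sigmoid) := by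
  refine ⟨?_, fun K hK hKc => ?_⟩
  · rw [measurableEmbedding_real_sigmoid.map_apply, ← Real.range_sigmoid, preimage_compl,
      preimage_range, compl_univ, measure_empty]
  · rw [measurableEmbedding_real_sigmoid.map_apply]
    exact (isCompact_preimage_sigmoid hK hKc).measure_lt_top

lemma IsStationary.isInvOn01_map_sigmoid (hν : IsStationary w g ν)
    (hgh : ∀ i, Semiconj Real.sigmoid (g i) (h i)) : IsInvOn01 h w (ν.map Real.sigmoid) := by
  intro f hf hfc hsub
  simp only [measurableEmbedding_real_sigmoid.integral_map, ← (hgh _).eq]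
  exact hν (f ∘ Real.sigmoid) (hf.comp continuous_sigmoid) <|
    .intro (isCompact_preimage_sigmoid hsub hfc) fun _ => image_eq_zero_of_notMem_tsupport

lemma map_comap_sigmoid (hν : IsRadonOn01 ν) :
    (ν.comap Real.sigmoid).map Real.sigmoid = ν := by
  rw [measurableEmbedding_real_sigmoid.map_comap, Real.range_sigmoid]
  exact Measure.restrict_eq_self_of_ae_mem (ae_iff.2 hν.1)

lemma isFiniteMeasureOnCompacts_comap_sigmoid (hν : IsRadonOn01 ν) :
    IsFiniteMeasureOnCompacts (ν.comap Real.sigmoid) := by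
  refine ⟨fun K hK => ?_⟩
  rw [measurableEmbedding_real_sigmoid.comap_apply]
  refine hν.2 _ ?_ (hK.image continuous_sigmoid)
  exact image_subset_iff.2 fun s _ => sigmoid_mem_Ioo s

lemma continuous_extend_sigmoid {f : ℝ → ℝ} (hf : Continuous f) (hfc : HasCompactSupport f) :
    Continuous (extend Real.sigmoid f 0) := by
  refine continuous_of_tsupport fun x hx => ?_
  obtain ⟨s, -, rfl⟩ := hfc.tsupport_extend_zero_subset continuous_sigmoid hx
  rw [← isOpenEmbedding_sigmoid.continuousAt_iff, extend_comp Real.sigmoid_injective]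
  exact hf.continuousAt

lemma isStationary_comap_sigmoid (hν : IsRadonOn01 ν) (hinv : IsInvOn01 h w ν)
    (hgh : ∀ i, Semiconj Real.sigmoid (g i) (h i)) :
    IsStationary w g (ν.comap Real.sigmoid) := by
  intro f hf hfc
  have hsub : tsupport (extend Real.sigmoid f 0) ⊆ Ioo 0 1 := fun x hx => by
    obtain ⟨s, -, rfl⟩ := hfc.tsupport_extend_zero_subset continuous_sigmoid hx
    exact sigmoid_mem_Ioo s
  have hF := hinv _ (continuous_extend_sigmoid hf hfc)
    (hfc.extend_zero continuous_sigmoid) hsub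
  rw [← map_comap_sigmoid hν] at hF
  simpa only [measurableEmbedding_real_sigmoid.integral_map, ← (hgh _).eq,
    Real.sigmoid_injective.extend_apply] using hF

lemma comap_sigmoid_ne_zero (hν : IsRadonOn01 ν) (h₀ : ν ≠ 0) : ν.comap Real.sigmoid ≠ 0 :=
  fun hzero => h₀ (by rw [← map_comap_sigmoid hν, hzero, Measure.map_zero])

end Transfer

section Main

variable {ι : Type*} [Fintype ι] {w a b : ι → ℝ} {h : ι → ℝ → ℝ}

lemma exists_isInvOn01 (hw : IsProbWeight w) (hh : ∀ i, HasEndMultipliers (h i) (a i) (b i))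
    (ha : 0 ≤ ∑ i, w i * Real.log (a i)) (hb : 0 ≤ ∑ i, w i * Real.log (b i))
    (hab : ∃ i, 1 < a i ∧ 1 < b i) :
    ∃ ν : Measure ℝ, ν ≠ 0 ∧ IsRadonOn01 ν ∧ IsInvOn01 h w ν := by
  choose e he using fun i => (hh i).exists_orderIso
  obtain ⟨B, K, hr, hl⟩ :=
    exists_asympTranslation_both_ends hw hh he (fun i => (e i).continuous) hab
  obtain ⟨ν, hν, hν₀, hstat⟩ := exists_isStationary_of_asympTranslation
    (e := fun i => (e i).toHomeomorph) hr hl hb ha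
    (hab.imp fun i hi => ⟨Real.log_pos hi.2, Real.log_pos hi.1⟩)
  exact ⟨ν.map Real.sigmoid,
    (Measure.map_eq_zero_iff measurableEmbedding_real_sigmoid.measurable.aemeasurable).not.2 hν₀,
    isRadonOn01_map_sigmoid, hstat.isInvOn01_map_sigmoid he⟩

lemma exists_eq_smul_of_isInvOn01 (hw : IsProbWeight w)
    (hh : ∀ i, HasEndMultipliers (h i) (a i) (b i))
    (ha : 0 ≤ ∑ i, w i * Real.log (a i)) (hb : 0 ≤ ∑ i, w i * Real.log (b i))
    (hab : ∃ i, 1 < a i ∧ 1 < b i) (hU : ∀ x ∈ Ioo (0 : ℝ) 1, ∃ i j, h i x < x ∧ x < h j x)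
    {ν₁ ν₂ : Measure ℝ} (h₁ : ν₁ ≠ 0) (hν₁ : IsRadonOn01 ν₁) (hinv₁ : IsInvOn01 h w ν₁)
    (h₂ : ν₂ ≠ 0) (hν₂ : IsRadonOn01 ν₂) (hinv₂ : IsInvOn01 h w ν₂) :
    ∃ C : ℝ≥0, 0 < C ∧ ν₁ = C • ν₂ := by
  choose e he using fun i => (hh i).exists_orderIso
  obtain ⟨B, K, hr, hl⟩ :=
    exists_asympTranslation_both_ends hw hh he (fun i => (e i).continuous) hab
  have hmove : ∀ s, ∃ i j, e i s < s ∧ s < e j s := fun s => by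
    simpa only [← (he _).eq, Real.sigmoid_lt_iff] using hU _ (sigmoid_mem_Ioo s)
  have S := twoSidedWalk_symm hr hl hb ha
    (hab.imp fun i hi => ⟨Real.log_pos hi.2, Real.log_pos hi.1⟩)
    (fun s => let ⟨i, _, hi, _⟩ := hmove s; ⟨i, hi⟩)
    (fun s => let ⟨_, j, _, hj⟩ := hmove s; ⟨j, hj⟩)
  have := isFiniteMeasureOnCompacts_comap_sigmoid hν₁
  have := isFiniteMeasureOnCompacts_comap_sigmoid hν₂
  obtain ⟨C, hC, heq⟩ := S.exists_eq_smul_of_isStationary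
    (isStationary_comap_sigmoid hν₁ hinv₁ he) (isStationary_comap_sigmoid hν₂ hinv₂ he)
    (comap_sigmoid_ne_zero hν₁ h₁) (comap_sigmoid_ne_zero hν₂ h₂)
  refine ⟨C, hC, ?_⟩
  rw [← map_comap_sigmoid hν₁, heq, Measure.map_smul, map_comap_sigmoid hν₂]

end Main

end IntervalWalk

theorem interval_diffeos_unique_invariant_measure_general
    {ι : Type*} [Fintype ι] (h : ι → ℝ → ℝ) (w a b : ι → ℝ)
    (hw : ∀ i, 0 < w i) (hw1 : ∑ i, w i = 1)
    (hh : ∀ i, IntervalWalk.HasEndMultipliers (h i) (a i) (b i))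
    (ha : 0 ≤ ∑ i, w i * Real.log (a i)) (hb : 0 ≤ ∑ i, w i * Real.log (b i))
    (hab : ∃ i, 1 < a i ∧ 1 < b i)
    (hU : ∀ x ∈ Ioo (0 : ℝ) 1, ∃ i j, h i x < x ∧ x < h j x) :
    (∃ ν : Measure ℝ, ν ≠ 0 ∧ IsRadonOn01 ν ∧ IsInvOn01 h w ν) ∧
    ∀ ν₁ ν₂ : Measure ℝ,
      ν₁ ≠ 0 → IsRadonOn01 ν₁ → IsInvOn01 h w ν₁ →
      ν₂ ≠ 0 → IsRadonOn01 ν₂ → IsInvOn01 h w ν₂ →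
      ∃ C : ℝ≥0, 0 < C ∧ ν₁ = C • ν₂ :=
  ⟨IntervalWalk.exists_isInvOn01 ⟨hw, hw1⟩ hh ha hb hab,
    fun _ _ => IntervalWalk.exists_eq_smul_of_isInvOn01 ⟨hw, hw1⟩ hh ha hb hab hU⟩

/-- **Corollary (C² diffeomorphisms of the interval).**
Let `μ` be a finitely supported probability measure on increasing `C²`
diffeomorphisms of `[0,1]`.  Under conditions (R'), (C') and (U') there exists a
nonzero invariant Radon measure on `(0,1)`, unique up to a positive multiplicative
constant. -/
theorem interval_diffeos_unique_invariant_measure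
    {ι : Type*} [Fintype ι] (h : ι → ℝ → ℝ) (w : ι → ℝ)
    (hw : ∀ i, 0 < w i) (hw1 : ∑ i : ι, w i = 1)
    -- each `h i` is an increasing C² diffeomorphism of [0,1]
    (hC2 : ∀ i, ContDiffOn ℝ 2 (h i) (Icc 0 1))
    (h0 : ∀ i, h i 0 = 0) (h1 : ∀ i, h i 1 = 1)
    (hmono : ∀ i, StrictMonoOn (h i) (Icc 0 1))
    (hsurj : ∀ i, SurjOn (h i) (Icc 0 1) (Icc 0 1))
    (hderiv : ∀ i, ∀ u ∈ Icc (0:ℝ) 1, 0 < derivWithin (h i) (Icc 0 1) u)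
    -- (R')
    (hR'0 : 0 ≤ ∑ i : ι, w i * Real.log (derivWithin (h i) (Icc 0 1) 0))
    (hR'1 : 0 ≤ ∑ i : ι, w i * Real.log (derivWithin (h i) (Icc 0 1) 1))
    -- (C')
    (hC' : ∃ i, 1 < derivWithin (h i) (Icc 0 1) 0 ∧ 1 < derivWithin (h i) (Icc 0 1) 1)
    -- (U')
    (hU' : ∀ x ∈ Ioo (0:ℝ) 1, ∃ i j, h i x < x ∧ x < h j x) :
    (∃ ν : Measure ℝ, ν ≠ 0 ∧ IsRadonOn01 ν ∧ IsInvOn01 h w ν) ∧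
    ∀ ν₁ ν₂ : Measure ℝ,
      ν₁ ≠ 0 → IsRadonOn01 ν₁ → IsInvOn01 h w ν₁ →
      ν₂ ≠ 0 → IsRadonOn01 ν₂ → IsInvOn01 h w ν₂ →
      ∃ C : ℝ≥0, 0 < C ∧ ν₁ = C • ν₂ := by
  exact interval_diffeos_unique_invariant_measure_general h w _ _ hw hw1
    (fun i => .of_contDiffOn (hC2 i) (h0 i) (h1 i) (hmono i)
      (hderiv i 0 (left_mem_Icc.2 zero_le_one)) (hderiv i 1 (right_mem_Icc.2 zero_le_one)))
    hR'0 hR'1 hC' hU'
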